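/- arXiv:2305.04781 — 3 statements merged into one kernel-verified Lean document; each statement's English description precedes it below -/
import Mathlib

section
/- (Classical Schönemann Irreducibility Criterion) Let p be a prime and let φ ∈ ℤ[x] be a monic polynomial whose reduction modulo p is irreducible in 𝔽_p[x]. Let n ≥ 1 and let f ∈ ℤ[x] be of the form f(x) = φ(x)^n + p·M(x), where M ∈ ℤ[x] has degree strictly less than n·deg φ. If the reductions of φ and M modulo p are coprime in 𝔽_p[x] (equivalently, since φ is irreducible mod p, the reduction of φ does not divide the reduction of M), then f is irreducible in ℚ[x]. -/
open Polynomial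

/-- **Classical Schönemann Irreducibility Criterion.** Let `p` be a prime and `φ ∈ ℤ[x]`
monic and irreducible mod `p`. Let `n ≥ 1` and `f = φ^n + p·M` with `deg M < n·deg φ`.
If the reductions mod `p` of `φ` and `M` are coprime in `𝔽_p[x]`, then `f` is irreducible
over `ℚ`. -/
theorem schonemann (p : ℕ) (hp : p.Prime) (φ M : ℤ[X]) (hφmonic : φ.Monic)
    (hφirr : Irreducible (φ.map (Int.castRingHom (ZMod p))))
    (n : ℕ) (hn : 1 ≤ n)
    (hM : M.degree < ((n * φ.natDegree : ℕ) : WithBot ℕ))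
    (hcop : IsCoprime (φ.map (Int.castRingHom (ZMod p)))
                      (M.map (Int.castRingHom (ZMod p)))) :
    Irreducible ((φ ^ n + C (p : ℤ) * M).map (Int.castRingHom ℚ)) := by
  haveI : Fact p.Prime := ⟨hp⟩
  set r := Int.castRingHom (ZMod p) with hr
  have hpr : r (p : ℤ) = 0 := by simp [hr]
  have hker : ∀ A : ℤ[X], A.map r = 0 → ∃ B, A = C (p : ℤ) * B := by
    intro A hA
    have : C (p : ℤ) ∣ A := by
      rw [C_dvd_iff_dvd_coeff]
      intro i
      have h := congrArg (fun q => q.coeff i) hA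
      simp only [coeff_map, coeff_zero] at h
      exact (ZMod.intCast_zmod_eq_zero_iff_dvd _ p).1 (by simpa [hr] using h)
    exact this
  have hφm : (φ.map r).Monic := hφmonic.map r
  have hφd : 0 < (φ.map r).natDegree := hφirr.natDegree_pos
  have hφd' : 0 < φ.natDegree := by rwa [hφmonic.natDegree_map] at hφd
  have hlt : (C (p : ℤ) * M).degree < (φ ^ n).degree := by
    rw [degree_C_mul (by exact_mod_cast hp.ne_zero),
      degree_eq_natDegree (hφmonic.pow n).ne_zero, hφmonic.natDegree_pow]
    exact hM
  have hfm : (φ ^ n + C (p : ℤ) * M).Monic := (hφmonic.pow n).add_of_left hlt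
  have key : Irreducible (φ ^ n + C (p : ℤ) * M) := by
    refine (irreducible_of_monic hfm ?_).2 ?_

    · intro h1
      have h2 := degree_add_eq_left_of_degree_lt hlt
      rw [h1, degree_eq_natDegree (hφmonic.pow n).ne_zero, hφmonic.natDegree_pow, degree_one] at h2
      have h3 : 0 = n * φ.natDegree := by exact_mod_cast h2
      have := Nat.mul_pos hn hφd'
      omega
    · intro g h hg hh hgh
      have hmap : g.map r * h.map r = (φ.map r) ^ n := by
        rw [← Polynomial.map_mul, hgh]; simp [hpr]
      have hone : ∀ q : ℤ[X], q.Monic → q.map r = 1 → q = 1 := by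
        intro q hq h1
        apply hq.natDegree_eq_zero.1
        rw [← hq.natDegree_map r, h1, natDegree_one]
      have hpow : ∀ q : ℤ[X], q.Monic → q.map r ∣ (φ.map r) ^ n →
          ∃ a, q.map r = (φ.map r) ^ a := by
        intro q hq hd
        obtain ⟨a, -, ha⟩ := (dvd_prime_pow hφirr.prime n).1 hd
        exact ⟨a, eq_of_monic_of_associated (hq.map r) (hφm.pow a) ha⟩
      obtain ⟨a, ha⟩ := hpow g hg ⟨_, hmap.symm⟩
      obtain ⟨b, hb⟩ := hpow h hh ⟨g.map r, by rw [← hmap, mul_comm]⟩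
      have hab : a + b = n := by
        rw [ha, hb, ← pow_add] at hmap
        have := congrArg natDegree hmap
        rw [hφm.natDegree_pow, hφm.natDegree_pow] at this
        exact Nat.eq_of_mul_eq_mul_right hφd this
      rcases Nat.eq_zero_or_pos a with rfl | ha0
      · left; exact hone g hg (by simpa using ha)
      rcases Nat.eq_zero_or_pos b with rfl | hb0
      · right; exact hone h hh (by simpa using hb)
      exfalso
      obtain ⟨G, hG⟩ := hker (g - φ ^ a) (by simp [ha])
      obtain ⟨H, hH⟩ := hker (h - φ ^ b) (by simp [hb])
      have hMeq : M = φ ^ a * H + φ ^ b * G + C (p : ℤ) * (G * H) := by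
        have hC : (C (p : ℤ) : ℤ[X]) ≠ 0 := by
          rw [Ne, C_eq_zero]; exact_mod_cast hp.ne_zero
        apply mul_left_cancel₀ hC
        rw [← hab, pow_add] at hgh
        rw [sub_eq_iff_eq_add] at hG hH
        rw [hG, hH] at hgh
        linear_combination -hgh
      have hdvd : φ.map r ∣ M.map r := by
        rw [hMeq]
        simp only [Polynomial.map_add, Polynomial.map_mul, Polynomial.map_pow, map_C, hpr, C_0,
          zero_mul, add_zero]
        exact dvd_add ((dvd_pow_self _ ha0.ne').mul_right _) ((dvd_pow_self _ hb0.ne').mul_right _)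
      exact hφirr.not_isUnit (hcop.isUnit_of_dvd' dvd_rfl hdvd)
  exact (hfm.irreducible_iff_irreducible_map_fraction_map (K := ℚ)).1 key
end

section
/- (Schur) Let n ≥ 1 be an integer and let a_0, a_1, …, a_n be integers with |a_0| = |a_n| = 1. Then the polynomial Σ_{i=0}^{n} a_i·x^i/i! is irreducible in ℚ[x] (equivalently, the integer polynomial Σ_{i=0}^{n} (n!/i!)·a_i·x^i is irreducible over ℚ). -/
open Polynomial

/-- Primes below 4096. -/
def schL1 : List ℕ :=
  [89, 107, 127, 151, 179, 199, 233, 269, 307, 349, 397, 449, 503, 563, 631, 701, 773, 857, 947, 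
   1039, 1129, 1237, 1327, 1447, 1571, 1699, 1831, 1979, 2131, 2293, 2459, 2633, 2819, 3011, 3217, 
   3433, 3659, 3889, 4093]

/-- Primes above 4096. -/
def schL2 : List ℕ :=
  [4339, 4603, 4877, 5153, 5449, 5749, 6067, 6397, 6737, 7079, 7433, 7793, 8179, 8581, 8999, 9431, 
   9871, 10331, 10799, 11287, 11789, 12301, 12829, 13367, 13921, 14489, 15083, 15683, 16301, 
   16943, 17599, 18269, 18959, 19661, 20389, 21121, 21881, 22651, 23447, 24251, 25087, 25943, 
   26813, 27701, 28607, 29537, 30491, 31397, 32381, 33391, 34421, 35461, 36529, 37619, 38737, 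
   39877, 41039, 42227, 43427, 44657, 45893, 47161, 48463, 49789, 51137, 52511, 53899, 55313, 
   56747, 58217, 59707, 61231, 62773, 64333, 65929, 67559, 69203, 70879, 72577, 74311, 76039, 
   77813, 79633, 81463, 83341, 85247, 87181, 89137, 91129, 93151, 95203, 97283, 99397, 101537, 
   103703, 105907, 108139, 110359, 112657, 114973, 117331, 119723, 122149, 124601, 127081, 129607, 
   132157, 134741, 137369, 140009, 142699, 145423, 148171, 150967, 153763, 156631, 159521, 162457, 
   165397, 168409, 171449, 174533, 177647, 180799, 183979, 187211, 190471, 193771, 197117, 200483, 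
   203897, 207343, 210839, 214381, 217937, 221549, 225167, 228859, 232597, 236377, 240197, 244043, 
   247943, 251887, 255869, 259867, 263933, 268043, 272191, 276389, 280627, 284899, 289213, 293543, 
   297953, 302411, 306913, 311453, 316037, 320669, 325349, 330067, 334843, 339659, 344497, 349411, 
   354371, 359377, 364423, 369491, 374639, 379817, 385057, 390347, 395687, 401069, 406507, 411991, 
   417523, 423109, 428741, 434411, 440131, 445891, 451723, 457609, 463537, 469501, 475529, 481619, 
   487757, 493939, 500179, 506479, 512821, 519227, 525677, 532187, 538751, 545371, 552031, 558757, 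
   565519, 572357, 579239, 586153, 593149, 600203, 607309, 614477, 621703, 628973, 636313, 643703, 
   651143, 658649, 666203, 673817, 681497, 689237, 697033, 704867, 712781, 720743, 728771, 736867, 
   745013, 753229, 761489, 769807, 778201, 786661, 795161, 803741, 812381, 821081, 829849, 838667, 
   847549, 856487, 865499, 874567, 883703, 892901, 902141, 911459, 920849, 930301, 939823, 949409, 
   959009, 968731, 978521, 988367, 998287, 1008263, 1018313, 1028411, 1038599, 1048847, 1059169, 
   1069553, 1080007, 1090519, 1101109, 1111771, 1122491, 1133287, 1144153, 1155071, 1166057, 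
   1177129, 1188277, 1199491, 1210777, 1222129, 1233539, 1245037, 1256597, 1268233, 1279937, 
   1291691, 1303541, 1315463, 1327427, 1339487, 1351621, 1363837, 1376131, 1388483, 1400923, 
   1413443, 1426003, 1438667, 1451393, 1464179, 1477067, 1490029, 1503059, 1516157, 1529327, 
   1542599, 1555943, 1569367, 1582813, 1596389, 1610027, 1623763, 1637563, 1651411, 1665343, 
   1679383, 1693511, 1707709, 1721983, 1736347, 1750769, 1765289, 1779893, 1794557, 1809323, 
   1824169, 1839091, 1854101, 1869193, 1884359, 1899589, 1914923, 1930309, 1945799, 1961381, 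
   1977023, 1992769, 2008571, 2024489, 2040481, 2056553, 2072701, 2088953, 2105287, 2121683, 
   2138189, 2154749, 2171431, 2188181, 2205031, 2221969, 2238989, 2256097, 2273279, 2290543, 
   2307913, 2325377, 2342869, 2360509, 2378237, 2396047, 2413951, 2431937, 2450017, 2468183, 
   2486443, 2504791, 2523229, 2541757, 2560379, 2579081, 2597869, 2616749, 2635727, 2654803, 
   2673941, 2693203, 2712559, 2731997, 2751517, 2771147, 2790871, 2810693, 2830609, 2850619, 
   2870717, 2890913, 2911193, 2931569, 2952029, 2972573, 2993227, 3013991, 3034853, 3055807, 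
   3076861, 3097999, 3119219, 3140551, 3161993, 3183511, 3205141, 3226871, 3248701, 3270629, 
   3292637, 3314767, 3336979, 3359309, 3381727, 3404251, 3426853, 3449561, 3472387, 3495301, 
   3518329, 3541459, 3564689, 3588019, 3611453, 3634963, 3658547, 3682271, 3706111, 3730033, 
   3754033, 3778163, 3802417, 3826777, 3851213, 3875747, 3900397, 3925171, 3950041, 3975017, 
   4000093, 4025279, 4050581, 4075987, 4101491, 4127111, 4152839, 4178641, 4204579, 4230623, 
   4256761, 4283017, 4309369, 4335841, 4362427, 4389083, 4415881, 4442777, 4469767, 4496881, 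
   4524097, 4551439, 4578901, 4606429, 4634111, 4661887, 4689781, 4717793, 4745921, 4774151, 
   4802491, 4830937, 4859513, 4888199, 4916993, 4945879, 4974901, 5004031, 5033227, 5062591, 
   5092069, 5121667, 5151373, 5181191, 5211109, 5241157, 5271323, 5301601, 5331983, 5362501, 
   5393123, 5423863, 5454731, 5485703, 5516801, 5548013, 5579351, 5610797, 5642369, 5674049, 
   5705857, 5737783, 5769833, 5801989, 5834267, 5866661, 5899183, 5931829, 5964593, 5997469, 
   6030473, 6063601, 6096833, 6130199, 6163693, 6197309, 6231037, 6264887, 6298847, 6332951, 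
   6367169, 6401509, 6435983, 6470573, 6505283, 6540103, 6575071, 6610159, 6645341, 6680657, 
   6716117, 6751711, 6787399, 6823247, 6859217, 6895303, 6931511, 6967861, 7004339, 7040947, 
   7077677, 7114501, 7151489, 7188583, 7225819, 7263163, 7300649, 7338269, 7376029, 7413919, 
   7451909, 7490051, 7528309, 7532579]

def schProd : ℕ → ℕ → ℕ
  | 0, s => s
  | d + 1, s => schProd d s * schProd d (s + 2 ^ d)

theorem schProd_dvd (d : ℕ) : ∀ s m : ℕ, s ≤ m → m < s + 2 ^ d → m ∣ schProd d s := by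
  induction d with
  | zero => intro s m h1 h2; obtain rfl : m = s := by simp at h2; omega
            exact dvd_rfl
  | succ d ih =>
    intro s m h1 h2
    rw [schProd]
    rcases lt_or_ge m (s + 2 ^ d) with h | h
    · exact (ih s m h1 h).mul_right _
    · exact (ih _ m h (by rw [pow_succ] at h2; omega)).mul_left _

theorem sch_prime_of_coprime (d q : ℕ) (hq : 1 < q) (hlt : q ≤ 2 ^ d * 2 ^ d)
    (hc : Nat.Coprime q (schProd d 1)) : q.Prime := by
  by_contra hnp
  have h1 := Nat.minFac_sq_le_self (by omega) hnp
  have h2 : q.minFac ≤ 2 ^ d := by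
    by_contra h
    push Not at h
    have := Nat.mul_lt_mul'' h h
    rw [sq] at h1
    omega
  have h3 : q.minFac ∣ schProd d 1 := schProd_dvd d 1 _ (Nat.minFac_pos q) (by omega)
  have h4 := Nat.dvd_gcd (Nat.minFac_dvd q) h3
  rw [hc] at h4
  have h5 := Nat.minFac_eq_one_iff.mp (Nat.dvd_one.mp h4)
  omega

def schChain : ℕ → List ℕ → Bool
  | _, [] => true
  | p, q :: l => decide (p < q) && decide ((q - p) ^ 3 ≤ p ^ 2) && schChain q l

theorem schChain_spec (l : List ℕ) : ∀ p : ℕ, p.Prime → (∀ q ∈ l, q.Prime) → schChain p l = true →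
    ∀ n, p ≤ n → n < (p :: l).getLast (by simp) →
      ∃ q, q.Prime ∧ q ≤ n ∧ (n + 1 - q) ^ 3 ≤ q ^ 2 := by
  induction l with
  | nil => intro p _ _ _ n h1 h2; simp at h2; omega
  | cons q l ih =>
    intro p hp hl hc n h1 h2
    simp only [schChain, Bool.and_eq_true, decide_eq_true_eq] at hc
    rcases lt_or_ge n q with h | h
    · refine ⟨p, hp, h1, le_trans (Nat.pow_le_pow_left (by omega) 3) hc.1.2⟩
    · refine ih q (hl q (by simp)) (fun r hr => hl r (by simp [hr])) hc.2 n h ?_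
      rwa [List.getLast_cons (by simp)] at h2

theorem sch_all_prime (d : ℕ) (l : List ℕ) (hc : Nat.Coprime l.prod (schProd d 1))
    (hl : ∀ q ∈ l, 1 < q ∧ q ≤ 2 ^ d * 2 ^ d) : ∀ q ∈ l, q.Prime := fun q hq =>
  sch_prime_of_coprime d q (hl q hq).1 (hl q hq).2 (hc.coprime_dvd_left (List.dvd_prod hq))

theorem sch_short (n : ℕ) (h1 : 73 ≤ n) (h2 : n < 7529536) :
    ∃ q, q.Prime ∧ q ≤ n ∧ (n + 1 - q) ^ 3 ≤ q ^ 2 := by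
  have p1 : ∀ q ∈ schL1, q.Prime := sch_all_prime 6 _ (by unfold Nat.Coprime; decide +kernel)
    (by decide +kernel)
  have p2 : ∀ q ∈ schL2, q.Prime := sch_all_prime 12 _ (by unfold Nat.Coprime; decide +kernel)
    (by decide +kernel)
  refine schChain_spec (schL1 ++ schL2) 73 (by norm_num) ?_ (by decide +kernel) n h1 ?_
  · intro q hq
    rcases List.mem_append.mp hq with h | h
    · exact p1 q h
    · exact p2 q h
  · refine lt_of_lt_of_le h2 ?_
    decide +kernel

theorem sch_choose_le_pow (n k M : ℕ) (hn : 0 < n) (hkn : k ≤ n)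
    (h : ∀ p : ℕ, p.Prime → p ∣ n.choose k → p ≤ M) :
    n.choose k ≤ n ^ Nat.primeCounting M := by
  rw [← Nat.prod_factorization_pow_eq_self (Nat.choose_ne_zero hkn), Finsupp.prod]
  refine (Finset.prod_le_prod' (g := fun _ => n) fun p _ =>
    Nat.pow_factorization_choose_le hn).trans ?_
  rw [Finset.prod_const, ← Nat.primesLE_card_eq_primeCounting]
  refine Nat.pow_le_pow_right hn (Finset.card_le_card fun p hp => ?_)
  rw [Nat.support_factorization, Nat.mem_primeFactors] at hp
  simp only [Nat.mem_primesLE]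
  exact ⟨h p hp.1 hp.2.1, hp.1⟩

theorem sch_choose_le (n k M : ℕ) (hn : 0 < n) (hkn : k ≤ n)
    (h : ∀ p : ℕ, p.Prime → p ∣ n.choose k → p ≤ M) :
    n.choose k ≤ n ^ Nat.primeCounting (Nat.sqrt n) * 4 ^ M := by
  conv_lhs => rw [← Nat.prod_factorization_pow_eq_self (Nat.choose_ne_zero hkn), Finsupp.prod]
  rw [← Finset.prod_filter_mul_prod_filter_not _ (· ≤ Nat.sqrt n)]
  apply mul_le_mul'
  · refine (Finset.prod_le_prod' (g := fun _ => n) fun p _ =>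
      Nat.pow_factorization_choose_le hn).trans ?_
    rw [Finset.prod_const, ← Nat.primesLE_card_eq_primeCounting]
    refine Nat.pow_le_pow_right hn (Finset.card_le_card fun p hp => ?_)
    rw [Finset.mem_filter, Nat.support_factorization, Nat.mem_primeFactors] at hp
    simp only [Nat.mem_primesLE]
    exact ⟨hp.2, hp.1.1⟩
  · refine le_trans ?_ (primorial_le_four_pow M)
    refine (Finset.prod_le_prod' (g := fun p => p) fun p hp => ?_).trans ?_
    · rw [Finset.mem_filter, Nat.support_factorization, Nat.mem_primeFactors] at hp
      refine (pow_right_mono₀ hp.1.1.one_lt.le ?_).trans (pow_one p).le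
      exact Nat.factorization_choose_le_one (Nat.sqrt_lt'.mp <| not_le.1 hp.2)
    · unfold primorial
      refine Finset.prod_le_prod_of_subset_of_one_le' (fun p hp => ?_) ?_
      · rw [Finset.mem_filter, Nat.support_factorization, Nat.mem_primeFactors] at hp
        simp only [Finset.mem_filter, Finset.mem_range]
        exact ⟨Nat.lt_succ_of_le (h p hp.1.1 hp.1.2.1), hp.1.1⟩
      · intro p hp _
        exact (Finset.mem_filter.1 hp).2.one_lt.le

theorem sch_pow_le_choose (k : ℕ) : ∀ n : ℕ, k ≤ n → n ^ k ≤ k ^ k * n.choose k := by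
  induction k with
  | zero => intro n _; simp
  | succ k ih =>
    intro n hn
    obtain ⟨m, rfl⟩ : ∃ m, n = m + 1 := ⟨n - 1, by omega⟩
    have hm : k ≤ m := by omega
    have h1 := ih m hm
    have h2 : (m + 1) ^ k ≤ (k + 1) ^ k * m.choose k := by
      rcases Nat.eq_zero_or_pos k with rfl | hk
      · simp
      have h3 : ((m + 1) * k) ^ k ≤ (m * (k + 1)) ^ k := Nat.pow_le_pow_left (by nlinarith) k
      rw [mul_pow, mul_pow] at h3
      have h4 : (m + 1) ^ k * k ^ k ≤ ((k + 1) ^ k * m.choose k) * k ^ k :=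
        h3.trans (by nlinarith [Nat.mul_le_mul_right ((k + 1) ^ k) h1])
      exact Nat.le_of_mul_le_mul_right h4 (by positivity)
    have h5 := Nat.add_one_mul_choose_eq m k
    calc (m + 1) ^ (k + 1) = (m + 1) * (m + 1) ^ k := by ring
      _ ≤ (m + 1) * ((k + 1) ^ k * m.choose k) := Nat.mul_le_mul_left _ h2
      _ = (k + 1) ^ k * ((m + 1) * m.choose k) := by ring
      _ = (k + 1) ^ (k + 1) * (m + 1).choose (k + 1) := by rw [h5]; ring

/-- A superset of the primes. -/
def schQ (m : ℕ) : Bool :=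
  (m == 2 || m == 3 || m == 5 || m == 7) || (!(m == 1) && Nat.gcd m 210 == 1)

theorem schQ_of_prime (m : ℕ) (hm : m.Prime) : schQ m = true := by
  by_cases h : Nat.Coprime m 210
  · have : m ≠ 1 := hm.one_lt.ne'
    have h2 : Nat.gcd m 210 = 1 := h
    simp [schQ, this, h2]
  · rw [hm.coprime_iff_not_dvd, not_not] at h
    have h2 : m ∈ Nat.primeFactors 210 := Nat.mem_primeFactors.mpr ⟨hm, h, by norm_num⟩
    have h3 : m ∣ 2 * 3 * 5 * 7 := h
    rw [hm.dvd_mul, hm.dvd_mul, hm.dvd_mul, Nat.prime_dvd_prime_iff_eq hm Nat.prime_two,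
      Nat.prime_dvd_prime_iff_eq hm Nat.prime_three,
      Nat.prime_dvd_prime_iff_eq hm Nat.prime_five,
      Nat.prime_dvd_prime_iff_eq hm (by norm_num)] at h3
    simp [schQ]
    tauto

def schCnt : ℕ → ℕ
  | 0 => 0
  | m + 1 => schCnt m + if schQ (m + 1) then 1 else 0

theorem sch_pi_le (k : ℕ) : Nat.primeCounting k ≤ schCnt k := by
  induction k with
  | zero => simp
  | succ m ih =>
    rw [schCnt]
    have : Nat.primeCounting (m + 1) = Nat.primeCounting m + if (m + 1).Prime then 1 else 0 := by
      unfold Nat.primeCounting Nat.primeCounting'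
      rw [Nat.count_succ]
    rw [this]
    by_cases hp : (m + 1).Prime
    · simp [hp, schQ_of_prime _ hp, ih]
    · simp [hp]; omega

theorem sch_pi_lt (k : ℕ) (hk : 37 ≤ k) : 3 * Nat.primeCounting k < k := by
  rcases lt_or_ge k 150 with h | h
  · have h1 : ∀ k < 150, 37 ≤ k → 3 * schCnt k < k := by decide +kernel
    have := h1 k h hk
    have := sch_pi_le k
    omega
  · obtain ⟨m, rfl⟩ : ∃ m, k = 150 + m := ⟨k - 150, by omega⟩
    have h1 := Nat.primeCounting_add_le (a := 30) (k := 150) (by norm_num) (by norm_num) m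
    have h2 : Nat.totient 30 = 8 := by decide +kernel
    have h3 : schCnt 150 = 36 ∨ schCnt 150 ≤ 38 := by decide +kernel
    have := sch_pi_le 150
    rw [h2] at h1
    omega

theorem sch_large (n k : ℕ) (hk : 37 ≤ k) (hkn : k ≤ n) (hnk : k ^ 3 ≤ n ^ 2) :
    ∃ p : ℕ, p.Prime ∧ p ∣ n.choose k ∧ k < p := by
  by_contra! h
  have h1 := sch_choose_le_pow n k k (by omega) hkn h
  have h2 := sch_pow_le_choose k n hkn
  have h3 := sch_pi_lt k hk
  set r := Nat.primeCounting k
  have h4 : n ^ k ≤ k ^ k * n ^ r := h2.trans (Nat.mul_le_mul_left _ h1)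
  have h5 : n ^ (3 * k) ≤ n ^ (2 * k + 3 * r) := by
    calc n ^ (3 * k) = (n ^ k) ^ 3 := by rw [← pow_mul]; ring_nf
      _ ≤ (k ^ k * n ^ r) ^ 3 := Nat.pow_le_pow_left h4 3
      _ = (k ^ 3) ^ k * n ^ (3 * r) := by
        rw [mul_pow, ← pow_mul, ← pow_mul, ← pow_mul]; ring_nf
      _ ≤ (n ^ 2) ^ k * n ^ (3 * r) := Nat.mul_le_mul_right _ (Nat.pow_le_pow_left hnk k)
      _ = n ^ (2 * k + 3 * r) := by rw [← pow_mul, pow_add]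
  have := (Nat.pow_le_pow_iff_right (by omega : 1 < n)).mp h5
  omega

theorem sch_small (n k : ℕ) (hk1 : 1 ≤ k) (hk : k < 37) (hkn : 2 * k ≤ n) (hn : 256 ≤ n) :
    ∃ p : ℕ, p.Prime ∧ p ∣ n.choose k ∧ k < p := by
  by_contra! h
  have h1 := sch_choose_le_pow n k k (by omega) (by omega) h
  have h2 := sch_pow_le_choose k n (by omega)
  have h3 := sch_pi_le k
  have h4 : ∀ k < 37, 1 ≤ k → schCnt k ≤ k ∧ k ^ k < 256 ^ (k - schCnt k) := by decide +kernel
  obtain ⟨h5, h6⟩ := h4 k hk hk1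
  set r := schCnt k
  have h7 : n ^ k ≤ k ^ k * n ^ r :=
    h2.trans (Nat.mul_le_mul_left _ (h1.trans (Nat.pow_le_pow_right (by omega) h3)))
  have h8 : n ^ k = n ^ (k - r) * n ^ r := by rw [← pow_add]; congr 1; omega
  rw [h8] at h7
  have h9 := Nat.le_of_mul_le_mul_right h7 (Nat.pow_pos (by omega))
  have := Nat.pow_le_pow_left hn (k - r)
  omega

theorem sch_tiny_aux (m k : ℕ) (hm : m ≠ 0) (hm2 : m < 256) (h : ¬ m ∣ k.factorial ^ 8) :
    ∃ p : ℕ, p.Prime ∧ k < p ∧ p ∣ m := by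
  by_contra! hc
  apply h
  rw [← Nat.factorization_prime_le_iff_dvd hm (by positivity)]
  intro p hp
  by_cases hd : p ∣ m
  · have h1 : p ≤ k := by
      by_contra hlt
      exact hc p hp (by omega) hd
    have h2 : 1 ≤ (k.factorial).factorization p :=
      (hp.dvd_iff_one_le_factorization (by positivity)).mp ((hp.dvd_factorial).mpr h1)
    rw [Nat.factorization_pow, Finsupp.smul_apply, smul_eq_mul]
    have h3 : p ^ m.factorization p ≤ m := Nat.ordProj_le p hm
    have h4 : 2 ^ m.factorization p ≤ p ^ m.factorization p := Nat.pow_le_pow_left hp.two_le _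
    have h5 : 2 ^ m.factorization p < 2 ^ 8 := by omega
    have h6 := (Nat.pow_lt_pow_iff_right (by norm_num : 1 < 2)).mp h5
    omega
  · rw [Nat.factorization_eq_zero_of_not_dvd hd]
    exact Nat.zero_le _

def schFindL (F n : ℕ) : ℕ → Bool
  | 0 => false
  | l + 1 => !((F % (n - l)) == 0) || schFindL F n l

def schFindN (F k : ℕ) : ℕ → Bool
  | 0 => true
  | m + 1 => (decide (m < 2 * k) || schFindL F m k) && schFindN F k m

def schFindK : ℕ → Bool
  | 0 => true
  | k + 1 => schFindN ((k + 1).factorial ^ 8) (k + 1) 256 && schFindK k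

theorem schFindL_spec (F n : ℕ) (k : ℕ) (h : schFindL F n k = true) :
    ∃ l < k, ¬ (n - l) ∣ F := by
  induction k with
  | zero => simp [schFindL] at h
  | succ k ih =>
    simp only [schFindL, Bool.or_eq_true, Bool.not_eq_true', beq_eq_false_iff_ne] at h
    rcases h with h | h
    · exact ⟨k, by omega, fun hd => h (Nat.mod_eq_zero_of_dvd hd)⟩
    · obtain ⟨l, hl, hd⟩ := ih h
      exact ⟨l, by omega, hd⟩

theorem schFindN_spec (F k : ℕ) (N : ℕ) (h : schFindN F k N = true) :
    ∀ n < N, 2 * k ≤ n → ∃ l < k, ¬ (n - l) ∣ F := by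
  induction N with
  | zero => intro n hn; omega
  | succ m ih =>
    intro n hn hk
    simp only [schFindN, Bool.and_eq_true, Bool.or_eq_true, decide_eq_true_eq] at h
    rcases Nat.lt_succ_iff_lt_or_eq.mp hn with h1 | rfl
    · exact ih h.2 n h1 hk
    · exact schFindL_spec F n k (h.1.resolve_left (by omega))

theorem schFindK_spec (K : ℕ) (h : schFindK K = true) :
    ∀ k ≤ K, 1 ≤ k → ∀ n < 256, 2 * k ≤ n → ∃ l < k, ¬ (n - l) ∣ k.factorial ^ 8 := by
  induction K with
  | zero => intro k h1 h2; omega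
  | succ K ih =>
    intro k h1 h2
    simp only [schFindK, Bool.and_eq_true] at h
    rcases Nat.le_succ_iff.mp h1 with h3 | rfl
    · exact ih h.2 k h3 h2
    · exact schFindN_spec _ _ _ h.1

theorem sch_tiny_check (k : ℕ) (hk : k < 37) (hk1 : 1 ≤ k) (n : ℕ) (hn : n < 256)
    (hkn : 2 * k ≤ n) : ∃ l < k, ¬ (n - l) ∣ k.factorial ^ 8 :=
  schFindK_spec 36 (by decide +kernel) k (by omega) hk1 n hn hkn

theorem sch_of_choose (n k : ℕ) (h : ∃ p : ℕ, p.Prime ∧ p ∣ n.choose k ∧ k < p) :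
    ∃ p : ℕ, p.Prime ∧ k < p ∧ ∃ l < k, p ∣ n - l := by
  obtain ⟨p, hp, hd, hk⟩ := h
  refine ⟨p, hp, hk, ?_⟩
  have h1 : p ∣ n.descFactorial k := by
    rw [Nat.descFactorial_eq_factorial_mul_choose]
    exact hd.mul_left _
  rw [Nat.descFactorial_eq_prod_range, (Nat.Prime.prime hp).dvd_finsetProd_iff] at h1
  obtain ⟨l, hl, hl2⟩ := h1
  exact ⟨l, Finset.mem_range.mp hl, hl2⟩

theorem sch_low (n k : ℕ) (hk : 1 ≤ k) (h1 : 2 * k ≤ n) (h2 : n ≤ 3 * k) :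
    (4 : ℝ) ^ k * (3 / 2) ^ (n - 2 * k) ≤ 2 * k * (n.choose k : ℝ) := by
  obtain ⟨j, rfl⟩ : ∃ j, n = 2 * k + j := ⟨n - 2 * k, by omega⟩
  rw [Nat.add_sub_cancel_left]
  induction j with
  | zero =>
    have := Nat.four_pow_le_two_mul_self_mul_centralBinom k hk
    rw [Nat.centralBinom_eq_two_mul_choose] at this
    simp only [pow_zero, mul_one, add_zero]
    exact_mod_cast this
  | succ j ih =>
    have ih' := ih (by omega) (by omega)
    have h3 := Nat.choose_mul_succ_eq (2 * k + j) k
    have h4 : ((2 * k + j).choose k : ℝ) * (2 * k + j + 1)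
        = ((2 * k + (j + 1)).choose k : ℝ) * (k + j + 1) := by
      have h5 : 2 * k + j + 1 - k = k + j + 1 := by omega
      rw [h5] at h3
      exact_mod_cast h3
    have h6 : (j : ℝ) + 1 ≤ k := by exact_mod_cast (by omega : j + 1 ≤ k)
    have h7 : (0 : ℝ) ≤ ((2 * k + j).choose k : ℝ) := by positivity
    have h9 : (0 : ℝ) < k + j + 1 := by positivity
    have h8 : (3 / 2 : ℝ) * ((2 * k + j).choose k : ℝ) ≤ ((2 * k + (j + 1)).choose k : ℝ) := by
      refine le_of_mul_le_mul_right ?_ h9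
      rw [← h4]
      nlinarith
    calc (4 : ℝ) ^ k * (3 / 2) ^ (j + 1) = 3 / 2 * (4 ^ k * (3 / 2) ^ j) := by ring
      _ ≤ 3 / 2 * (2 * k * ((2 * k + j).choose k : ℝ)) := by gcongr
      _ = 2 * k * (3 / 2 * ((2 * k + j).choose k : ℝ)) := by ring
      _ ≤ _ := by gcongr

theorem sch_key (n k : ℕ) (hk : 37 ≤ k) (h1 : 2 * k ≤ n)
    (h : ∀ p : ℕ, p.Prime → p ∣ n.choose k → p ≤ k) :
    (27 / 8 : ℝ) ^ k ≤ (n : ℝ) ^ (3 * Nat.primeCounting (Nat.sqrt n)) * (2 * k) ^ 3 := by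
  set r := Nat.primeCounting (Nat.sqrt n)
  have hkR : (0 : ℝ) < 2 * k := by
    have : (0 : ℝ) < k := by exact_mod_cast (by omega : 0 < k)
    linarith
  rcases le_or_gt n (3 * k) with h2 | h2
  · have hle : ∀ p : ℕ, p.Prime → p ∣ n.choose k → p ≤ n / 3 := by
      intro p hp hd
      by_contra hlt
      have h3 := Nat.factorization_choose_of_lt_three_mul (p := p) (n := n) (k := k) (by omega)
        (h p hp hd) (by have := h p hp hd; omega) (by omega)
      have := (hp.dvd_iff_one_le_factorization (Nat.choose_ne_zero (by omega))).mp hd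
      omega
    have h3 := sch_choose_le n k (n / 3) (by omega) (by omega) hle
    have h4 := sch_low n k (by omega) h1 h2
    obtain ⟨j, hj⟩ : ∃ j, n = 2 * k + j := ⟨n - 2 * k, by omega⟩
    have hj2 : n - 2 * k = j := by omega
    have hjk : j ≤ k := by omega
    rw [hj2] at h4
    have h5 : ((n.choose k : ℕ) : ℝ) ≤ (n : ℝ) ^ r * 4 ^ (n / 3) := by exact_mod_cast h3
    have h6 : (4 : ℝ) ^ k * (3 / 2) ^ j ≤ 2 * k * ((n : ℝ) ^ r * 4 ^ (n / 3)) :=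
      h4.trans (by gcongr)
    have h7 : ((4 : ℝ) ^ k * (3 / 2) ^ j) ^ 3 ≤ (2 * k * ((n : ℝ) ^ r * 4 ^ (n / 3))) ^ 3 := by
      gcongr
    have h8 : (2 * k * ((n : ℝ) ^ r * 4 ^ (n / 3))) ^ 3
        ≤ ((n : ℝ) ^ (3 * r) * (2 * k) ^ 3) * (16 ^ k * 4 ^ j) := by
      have e1 : (2 * k * ((n : ℝ) ^ r * 4 ^ (n / 3))) ^ 3
        = ((n : ℝ) ^ (3 * r) * (2 * k) ^ 3) * 4 ^ (n / 3 * 3) := by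
        rw [pow_mul (4 : ℝ), mul_comm 3 r, pow_mul (n : ℝ)]; ring
      have e2 : (16 : ℝ) ^ k * 4 ^ j = 4 ^ n := by
        rw [hj, pow_add, pow_mul]; norm_num
      rw [e1, e2]
      gcongr
      · norm_num
      · omega
    have h9 : ((4 : ℝ) ^ k * (3 / 2) ^ j) ^ 3 = (16 ^ k * 4 ^ j) * (4 ^ k * (27 / 32) ^ j) := by
      have e3 : (4 : ℝ) ^ j * (27 / 32) ^ j = ((3 / 2) ^ j) ^ 3 := by
        rw [← mul_pow, ← pow_mul, mul_comm j 3, pow_mul]; norm_num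
      have e4 : (16 : ℝ) ^ k * 4 ^ k = (4 ^ k) ^ 3 := by
        rw [← mul_pow, ← pow_mul, mul_comm k 3, pow_mul]; norm_num
      rw [mul_pow, ← e3, ← e4]; ring
    have h10 : (27 / 8 : ℝ) ^ k ≤ 4 ^ k * (27 / 32) ^ j := by
      have e5 : (27 / 8 : ℝ) ^ k = 4 ^ k * (27 / 32) ^ k := by rw [← mul_pow]; norm_num
      rw [e5]
      gcongr ?_ * ?_
      exact pow_le_pow_of_le_one (by norm_num) (by norm_num) hjk
    refine h10.trans ?_
    have h11 : (0 : ℝ) < 16 ^ k * 4 ^ j := by positivity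
    refine le_of_mul_le_mul_left ?_ h11
    rw [← h9]
    refine (h7.trans h8).trans (le_of_eq (mul_comm _ _))
  · have h3 := sch_choose_le n k k (by omega) (by omega) h
    have h4 := sch_low (3 * k) k (by omega) (by omega) le_rfl
    have h5 : (3 * k).choose k ≤ n.choose k := Nat.choose_le_choose k h2.le
    have hj2 : 3 * k - 2 * k = k := by omega
    rw [hj2] at h4
    have h6 : (((3 * k).choose k : ℕ) : ℝ) ≤ (n : ℝ) ^ r * 4 ^ k := by
      exact_mod_cast h5.trans h3
    have h7 : (4 : ℝ) ^ k * (3 / 2) ^ k ≤ 4 ^ k * (2 * k * (n : ℝ) ^ r) :=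
      h4.trans ((mul_le_mul_of_nonneg_left h6 hkR.le).trans (le_of_eq (by ring)))
    have h8 := le_of_mul_le_mul_left h7 (by positivity)
    have h9 : ((3 / 2 : ℝ) ^ k) ^ 3 ≤ (2 * k * (n : ℝ) ^ r) ^ 3 := by gcongr
    have e : (27 / 8 : ℝ) ^ k = ((3 / 2 : ℝ) ^ k) ^ 3 := by
      rw [← pow_mul, mul_comm k 3, pow_mul]; norm_num
    rw [e, mul_comm 3 r, pow_mul (n : ℝ)]
    refine h9.trans (le_of_eq (by ring))

theorem sch_real (n k s : ℕ) (hk : 14 ^ 4 ≤ k) (hn0 : 1 ≤ n) (hn : n ^ 2 < k ^ 3) (hs : s ^ 2 ≤ n) :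
    (n : ℝ) ^ s * (2 * k) ^ 3 < (27 / 8 : ℝ) ^ k := by
  have hkR : (14 : ℝ) ^ 4 ≤ k := by exact_mod_cast hk
  have hk0 : (0 : ℝ) < k := lt_of_lt_of_le (by norm_num) hkR
  obtain ⟨y, hy0, hy⟩ : ∃ y : ℝ, 0 ≤ y ∧ y ^ 4 = k := by
    refine ⟨(k : ℝ) ^ ((1 : ℝ) / 4), by positivity, ?_⟩
    rw [← Real.rpow_natCast, ← Real.rpow_mul hk0.le]; norm_num
  have hy14 : 14 ≤ y := by
    rw [← hy] at hkR
    exact le_of_pow_le_pow_left₀ (by norm_num) hy0 hkR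
  have hnR : (n : ℝ) ^ 2 ≤ (k : ℝ) ^ 3 := by exact_mod_cast hn.le
  have hsR : (s : ℝ) ^ 2 ≤ n := by exact_mod_cast hs
  have hn1 : (1 : ℝ) ≤ n := by exact_mod_cast hn0
  have hny : (n : ℝ) ≤ y ^ 6 := by
    refine le_of_pow_le_pow_left₀ (n := 2) (by norm_num) (by positivity) ?_
    refine hnR.trans (le_of_eq ?_)
    rw [← hy]; ring
  have hsy : (s : ℝ) ≤ y ^ 3 := by
    refine le_of_pow_le_pow_left₀ (n := 2) (by norm_num) (by positivity) ?_
    refine (hsR.trans hny).trans (le_of_eq ?_)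
    ring
  have hypos : 0 < y := by linarith
  have hlog : Real.log y ≤ 1.773 + y / 16 := by
    have h1 := Real.log_le_sub_one_of_pos (show 0 < y / 16 by positivity)
    rw [Real.log_div hypos.ne' (by norm_num)] at h1
    have h2 : Real.log 16 = 4 * Real.log 2 := by
      rw [show (16 : ℝ) = 2 ^ 4 by norm_num, Real.log_pow]; norm_num
    have := Real.log_two_lt_d9
    linarith
  have hlogn : Real.log n ≤ 6 * Real.log y := by
    have := Real.log_le_log (by linarith) hny
    rw [Real.log_pow] at this
    exact_mod_cast this
  have hlogk : Real.log (2 * k) ≤ 0.7 + 4 * Real.log y := by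
    rw [Real.log_mul (by norm_num) hk0.ne', ← hy, Real.log_pow]
    have := Real.log_two_lt_d9
    push_cast
    linarith
  have hlog27 : 6 / 5 ≤ Real.log (27 / 8) := by
    rw [Real.le_log_iff_exp_le (by norm_num)]
    refine le_of_pow_le_pow_left₀ (n := 5) (by norm_num) (by norm_num) ?_
    rw [← Real.exp_nat_mul]
    have h1 : Real.exp ((5 : ℕ) * (6 / 5)) = (Real.exp 1) ^ 6 := by
      rw [← Real.exp_nat_mul]; norm_num
    rw [h1]
    have h2 := Real.exp_one_lt_d9
    calc Real.exp 1 ^ 6 ≤ 2.7182818286 ^ 6 := by gcongr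
      _ ≤ _ := by norm_num
  have hl0 : 0 ≤ Real.log y := Real.log_nonneg (by linarith)
  have hln0 : 0 ≤ Real.log n := Real.log_nonneg hn1
  have hpos : (0 : ℝ) < (n : ℝ) ^ s * (2 * k) ^ 3 := by positivity
  rw [← Real.log_lt_log_iff hpos (by positivity), Real.log_mul (by positivity) (by positivity),
    Real.log_pow, Real.log_pow, Real.log_pow]
  have a1 : (s : ℝ) * Real.log n ≤ y ^ 3 * (6 * (1.773 + y / 16)) := by
    apply mul_le_mul hsy (by linarith) hln0 (by positivity)
  have a2 : y ^ 4 * (6 / 5) ≤ (k : ℝ) * Real.log (27 / 8) := by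
    rw [← hy]; gcongr
  have a3 : (14 : ℝ) ^ 3 ≤ y ^ 3 := by gcongr
  have a4 : 14 * y ^ 3 ≤ y ^ 4 := by nlinarith [pow_pos hypos 3]
  have a5 : 14 ^ 3 * y ≤ y ^ 4 := by nlinarith
  push_cast
  linarith

theorem sch_mid (n k : ℕ) (hk : 37 ≤ k) (h1 : 2 * k ≤ n) (hn : n < 14 ^ 6) (hnk : n ^ 2 < k ^ 3) :
    ∃ p : ℕ, p.Prime ∧ k < p ∧ ∃ l < k, p ∣ n - l := by
  obtain ⟨q, hq, hqn, hq3⟩ := sch_short n (by omega) (by norm_num at hn; omega)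
  have h2 : (n + 1 - q) ^ 3 < k ^ 3 :=
    lt_of_le_of_lt (hq3.trans (Nat.pow_le_pow_left hqn 2)) hnk
  have h3 : n + 1 - q < k := lt_of_pow_lt_pow_left₀ 3 (by omega) h2
  refine ⟨q, hq, by omega, n - q, by omega, ?_⟩
  rw [Nat.sub_sub_self hqn]

/-- The Sylvester–Schur theorem. -/
theorem sch_sylvester (n k : ℕ) (hk : 1 ≤ k) (h1 : 2 * k ≤ n) :
    ∃ p : ℕ, p.Prime ∧ k < p ∧ ∃ l < k, p ∣ n - l := by
  rcases lt_or_ge k 37 with h2 | h2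
  · rcases lt_or_ge n 256 with h3 | h3
    · obtain ⟨l, hl, hd⟩ := sch_tiny_check k h2 hk n h3 h1
      obtain ⟨p, hp, hkp, hpd⟩ := sch_tiny_aux (n - l) k (by omega) (by omega) hd
      exact ⟨p, hp, hkp, l, hl, hpd⟩
    · exact sch_of_choose n k (sch_small n k hk h2 h1 h3)
  · rcases lt_or_ge (n ^ 2) (k ^ 3) with h3 | h3
    · rcases lt_or_ge n (14 ^ 6) with h4 | h4
      · exact sch_mid n k h2 h1 h4 h3
      · apply sch_of_choose
        by_contra! hc
        have h5 : 14 ^ 4 ≤ k := by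
          have : (14 ^ 4) ^ 3 < k ^ 3 := by
            refine lt_of_le_of_lt ?_ h3
            calc (14 ^ 4) ^ 3 = (14 ^ 6) ^ 2 := by norm_num
              _ ≤ n ^ 2 := Nat.pow_le_pow_left h4 2
          exact (lt_of_pow_lt_pow_left₀ 3 (by omega) this).le
        have h6 := sch_key n k h2 h1 hc
        have hs : Nat.sqrt n ^ 2 ≤ n := Nat.sqrt_le' n
        have h7 := sch_real n k (Nat.sqrt n) h5 (by omega) h3 hs
        have hs37 : 37 ≤ Nat.sqrt n := by
          rw [Nat.le_sqrt]
          norm_num at h4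
          omega
        have h8 := sch_pi_lt _ hs37
        have h9 : (n : ℝ) ^ (3 * Nat.primeCounting (Nat.sqrt n)) ≤ (n : ℝ) ^ (Nat.sqrt n) := by
          apply pow_le_pow_right₀ _ h8.le
          exact_mod_cast (by omega : 1 ≤ n)
        have h10 : (0 : ℝ) ≤ (2 * k) ^ 3 := by positivity
        have := mul_le_mul_of_nonneg_right h9 h10
        linarith
    · exact sch_of_choose n k (sch_large n k h2 (by omega) h3)

theorem sch_modp (n k l p : ℕ) (hp : p.Prime) (hl : l < k) (hkn : 2 * k ≤ n) (hd : p ∣ n - l)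
    (a : ℕ → ℤ) (hnatop : (a n).natAbs = 1) (A B F : ℤ[X])
    (hF : ∀ i, F.coeff i = if i ≤ n then a i * (n.descFactorial (n - i) : ℤ) else 0)
    (hA : A.Monic) (hAd : A.natDegree = k) (hAB : F = A * B) : (p : ℤ) ∣ A.coeff 0 := by
  have : Fact p.Prime := ⟨hp⟩
  by_contra hc
  have hFn : (F.coeff n).natAbs = 1 := by rw [hF]; simpa using hnatop
  have hFd : F.natDegree ≤ n := by
    rw [natDegree_le_iff_coeff_eq_zero]
    intro i hi
    rw [hF, if_neg (by omega)]
  have hB0 : B ≠ 0 := by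
    rintro rfl
    rw [hAB] at hFn
    simp at hFn
  have hBd : B.natDegree ≤ n - k := by
    have := hA.natDegree_mul' hB0
    rw [← hAB] at this
    omega
  let φ := Int.castRingHom (ZMod p)
  have hX : (X : (ZMod p)[X]) ^ (n - l) ∣ F.map φ := by
    rw [X_pow_dvd_iff]
    intro i hi
    rw [coeff_map, hF, if_pos (by omega)]
    have h1 : p ∣ n.descFactorial (n - i) := by
      rw [Nat.descFactorial_eq_prod_range]
      exact hd.trans (Finset.dvd_prod_of_mem (fun j => n - j) (Finset.mem_range.mpr (by omega)))
    have h2 : ((n.descFactorial (n - i) : ℕ) : ZMod p) = 0 := (ZMod.natCast_eq_zero_iff _ _).mpr h1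
    simp [h2]
  have hFp : F.map φ ≠ 0 := by
    intro h
    have h1 := congrArg (fun q => q.coeff n) h
    simp only [coeff_map, coeff_zero] at h1
    rcases Int.natAbs_eq_iff.mp hFn with h2 | h2 <;> rw [h2] at h1 <;> simp at h1
  have hcop : IsCoprime ((X : (ZMod p)[X]) ^ (n - l)) (A.map φ) := by
    apply IsCoprime.pow_left
    rw [(Polynomial.irreducible_X).coprime_iff_not_dvd, X_dvd_iff, coeff_map]
    intro h
    exact hc ((ZMod.intCast_zmod_eq_zero_iff_dvd _ _).mp h)
  rw [hAB, Polynomial.map_mul] at hX hFp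
  have h3 := hcop.dvd_of_dvd_mul_left hX
  have h4 := natDegree_le_of_dvd h3 (right_ne_zero_of_mul hFp)
  rw [natDegree_X_pow] at h4
  have h5 : (B.map φ).natDegree ≤ B.natDegree := natDegree_map_le
  omega

open NumberField WithZero in
theorem sch_val {K : Type*} [Field K] [NumberField K] (k p : ℕ) (hk : Module.finrank ℚ K = k)
    (hp : p.Prime) (hkp : k < p) (n : ℕ) (a : ℕ → ℤ) (h0 : (a 0).natAbs = 1) (α : 𝓞 K)
    (hsum : ∑ i ∈ Finset.range (n + 1), ((a i : K) / (i.factorial : K)) * (α : K) ^ i = 0)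
    (hnorm : (p : ℤ) ∣ Algebra.norm ℤ α) : False := by
  have : Fact p.Prime := ⟨hp⟩
  have h1 : p ∣ Ideal.absNorm (Ideal.span {α}) := by
    rw [Ideal.absNorm_span_singleton]
    exact Int.natCast_dvd.mp hnorm
  obtain ⟨P, hPm, hPu, hPd⟩ := Ideal.exists_isMaximal_dvd_of_dvd_absNorm' hp _ h1
  have hmem : ∀ z : ℤ, (z : 𝓞 K) ∈ P ↔ (p : ℤ) ∣ z := by
    intro z
    rw [← Ideal.mem_span_singleton, ← hPu, Ideal.mem_comap]
    simp
  have hpP : (p : 𝓞 K) ∈ P := by exact_mod_cast (hmem p).mpr dvd_rfl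
  have hp0 : (p : 𝓞 K) ≠ 0 := by exact_mod_cast hp.ne_zero
  have hPbot : P ≠ ⊥ := by
    rintro rfl
    exact hp0 (by simpa using hpP)
  have hNp : Ideal.absNorm (Ideal.span {(p : 𝓞 K)}) = p ^ k := by
    rw [Ideal.absNorm_span_singleton]
    have : Algebra.norm ℤ (p : 𝓞 K) = (p : ℤ) ^ k := by
      have h2 := Algebra.norm_algebraMap (R := ℤ) (S := 𝓞 K) (p : ℤ)
      rw [RingOfIntegers.rank, hk] at h2
      simpa using h2
    rw [this]; simp [Int.natAbs_pow]
  have hpN : p ∣ Ideal.absNorm P := by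
    have h2 : Ideal.absNorm P ∣ p ^ k := by
      rw [← hNp]
      exact Ideal.absNorm_dvd_absNorm_of_le ((Ideal.span_singleton_le_iff_mem _).mpr hpP)
    obtain ⟨j, _, hj⟩ := (Nat.dvd_prime_pow hp).mp h2
    have h3 : j ≠ 0 := by
      rintro rfl
      rw [pow_zero, Ideal.absNorm_eq_one_iff] at hj
      exact hPm.ne_top hj
    rw [hj]
    exact dvd_pow_self p h3
  have hnd : ¬ P ^ (k + 1) ∣ Ideal.span {(p : 𝓞 K)} := by
    intro h
    have h2 := map_dvd Ideal.absNorm h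
    rw [hNp, map_pow] at h2
    have h3 := (pow_dvd_pow_of_dvd hpN (k + 1)).trans h2
    have := (Nat.pow_dvd_pow_iff_le_right hp.one_lt).mp h3
    omega
  let v : IsDedekindDomain.HeightOneSpectrum (𝓞 K) := ⟨P, hPm.isPrime, hPbot⟩
  have hvp : exp (-(k : ℤ)) ≤ v.intValuation (p : 𝓞 K) := by
    rw [v.exp_le_intValuation_iff_emultiplicity_le]
    have h2 := emultiplicity_lt_iff_not_dvd.mpr hnd
    exact Order.le_of_lt_add_one (by exact_mod_cast h2)
  have hvα : v.intValuation α ≤ exp (-(1 : ℤ)) := by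
    have := (v.intValuation_le_pow_iff_dvd α 1).mpr (by simpa using hPd)
    simpa using this
  have hvf : ∀ i : ℕ, i ≠ 0 → exp (-(i : ℤ)) < v.intValuation ((i.factorial : ℕ) : 𝓞 K) := by
    intro i hi
    obtain ⟨u, hu1, hu2⟩ : ∃ u, i.factorial = p ^ padicValNat p i.factorial * u ∧ ¬ p ∣ u := by
      refine ⟨i.factorial / p ^ padicValNat p i.factorial, ?_, ?_⟩
      · exact (Nat.mul_div_cancel' pow_padicValNat_dvd).symm
      · rw [← Nat.factorization_def _ hp]
        exact Nat.not_dvd_ordCompl hp (Nat.factorial_ne_zero i)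
    have hw := sub_one_mul_padicValNat_factorial_lt_of_ne_zero p hi
    set w := padicValNat p i.factorial
    have hu3 : v.intValuation (u : 𝓞 K) = 1 := by
      rw [IsDedekindDomain.HeightOneSpectrum.intValuation_eq_one_iff]
      intro h
      apply hu2
      have := (hmem (u : ℤ)).mp (by exact_mod_cast h)
      exact_mod_cast this
    rw [hu1]
    push_cast
    rw [map_mul, map_pow, hu3, mul_one]
    have h5 : k * w < i := lt_of_le_of_lt (Nat.mul_le_mul_right w (by omega)) hw
    refine lt_of_lt_of_le ?_ (pow_le_pow_left₀ zero_le hvp w)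
    rw [← exp_nsmul, exp_lt_exp]
    simp only [nsmul_eq_mul]
    have : (k : ℤ) * w < i := by exact_mod_cast h5
    linarith
  let V := v.valuation K
  have hVint : ∀ z : ℤ, V (z : K) ≤ 1 := by
    intro z
    have := v.valuation_le_one (K := K) (z : 𝓞 K)
    simpa using this
  rw [Finset.sum_range_succ'] at hsum
  have hlt : V (∑ i ∈ Finset.range n,
      ((a (i + 1) : K) / ((i + 1).factorial : K)) * (α : K) ^ (i + 1)) < 1 := by
    apply V.map_sum_lt one_ne_zero
    intro i _
    have e1 : V (((i + 1).factorial : ℕ) : K) = v.intValuation (((i + 1).factorial : ℕ) : 𝓞 K) := by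
      rw [← v.valuation_of_algebraMap (K := K)]; simp [V]
    have e2 : V (α : K) = v.intValuation α := v.valuation_of_algebraMap (K := K) α
    have h6 := hvf (i + 1) (by omega)
    have h7 : (v.intValuation α) ^ (i + 1) ≤ exp (-((i + 1 : ℕ) : ℤ)) := by
      refine (pow_le_pow_left₀ zero_le hvα (i + 1)).trans (le_of_eq ?_)
      rw [← exp_nsmul]; simp
    rw [map_mul, map_div₀, map_pow, e1, e2, div_mul_eq_mul_div,
      div_lt_one₀ (lt_of_le_of_lt zero_le h6)]
    calc V (a (i + 1) : K) * v.intValuation α ^ (i + 1) ≤ 1 * v.intValuation α ^ (i + 1) := by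
          gcongr; exact hVint _
      _ ≤ exp (-((i + 1 : ℕ) : ℤ)) := by rw [one_mul]; exact h7
      _ < _ := h6
  have heq := eq_neg_of_add_eq_zero_left hsum
  rw [heq, Valuation.map_neg] at hlt
  rcases Int.natAbs_eq_iff.mp h0 with h2 | h2 <;> simp [h2] at hlt

theorem sch_core {K : Type*} [Field K] [NumberField K] (pb : PowerBasis ℚ K) (n k : ℕ)
    (hk : Module.finrank ℚ K = k) (hk1 : 1 ≤ k) (hkn : 2 * k ≤ n) (a : ℕ → ℤ)
    (h0 : (a 0).natAbs = 1) (hnatop : (a n).natAbs = 1)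
    (hsum : ∑ i ∈ Finset.range (n + 1), ((a i : K) / (i.factorial : K)) * pb.gen ^ i = 0) :
    False := by
  obtain ⟨p, hp, hkp, l, hl, hd⟩ := sch_sylvester n k hk1 hkn
  let F : ℤ[X] := ∑ i ∈ Finset.range (n + 1), C (a i * (n.descFactorial (n - i) : ℤ)) * X ^ i
  have hF : ∀ i, F.coeff i = if i ≤ n then a i * (n.descFactorial (n - i) : ℤ) else 0 := by
    intro i
    simp only [F, finsetSum_coeff, coeff_C_mul, coeff_X_pow, mul_ite, mul_one, mul_zero,
      Finset.sum_ite_eq, Finset.mem_range, Nat.lt_succ_iff]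
  have hFα : aeval pb.gen F = 0 := by
    have h1 : aeval pb.gen F = (n.factorial : K) *
        ∑ i ∈ Finset.range (n + 1), ((a i : K) / (i.factorial : K)) * pb.gen ^ i := by
      simp only [F, map_sum, map_mul, map_pow, aeval_X, aeval_C, Finset.mul_sum]
      refine Finset.sum_congr rfl fun i hi => ?_
      have hi' : i ≤ n := Nat.lt_succ_iff.mp (Finset.mem_range.mp hi)
      have h2 := Nat.factorial_mul_descFactorial (Nat.sub_le n i)
      rw [Nat.sub_sub_self hi'] at h2
      have h3 : (i.factorial : K) ≠ 0 := by exact_mod_cast Nat.factorial_ne_zero i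
      rw [← h2]
      push_cast
      simp only [algebraMap_int_eq, eq_intCast]
      push_cast
      field_simp
    rw [h1, hsum, mul_zero]
  have hFn : (F.coeff n).natAbs = 1 := by rw [hF]; simpa using hnatop
  have hFd : F.natDegree ≤ n := by
    rw [natDegree_le_iff_coeff_eq_zero]
    intro i hi
    rw [hF, if_neg (by omega)]
  have hint : IsIntegral ℤ pb.gen := by
    refine ⟨C (F.coeff n) * F, ?_, ?_⟩
    · refine monic_of_natDegree_le_of_coeff_eq_one n ?_ ?_
      · exact (natDegree_C_mul_le _ _).trans hFd
      · rw [coeff_C_mul]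
        rcases Int.natAbs_eq_iff.mp hFn with h | h <;> rw [h] <;> norm_num
    · rw [← aeval_def, map_mul, hFα, mul_zero]
  have hmp := minpoly.isIntegrallyClosed_eq_field_fractions' ℚ hint
  have hmon := minpoly.monic hint
  obtain ⟨B, hB⟩ := minpoly.isIntegrallyClosed_dvd hint hFα
  have hdeg : (minpoly ℤ pb.gen).natDegree = k := by
    rw [← hk, pb.finrank, ← pb.natDegree_minpoly, hmp, hmon.natDegree_map]
  have hdvd := sch_modp n k l p hp hl hkn hd a hnatop _ B F hF hmon hdeg hB
  obtain ⟨α, hα⟩ : ∃ α : NumberField.RingOfIntegers K, (α : K) = pb.gen := ⟨⟨pb.gen, hint⟩, rfl⟩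
  refine sch_val k p hk hp hkp n a h0 α (by rw [hα]; exact hsum) ?_
  have hn1 : (Algebra.norm ℤ α : ℚ)
      = (((-1) ^ pb.dim * (minpoly ℤ pb.gen).coeff 0 : ℤ) : ℚ) := by
    rw [Algebra.coe_norm_int, hα]
    have := Algebra.PowerBasis.norm_gen_eq_coeff_zero_minpoly pb
    rw [hmp, coeff_map] at this
    push_cast
    exact this
  rw [Int.cast_inj.mp hn1]
  exact hdvd.mul_left _

/-- **Schur's theorem.** Let `n ≥ 1` and let `a 0, …, a n` be integers with
`|a 0| = |a n| = 1`. Then `∑_{i≤n} (a i)·x^i/i!` is irreducible over `ℚ`. -/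
theorem schur (n : ℕ) (hn : 1 ≤ n) (a : ℕ → ℤ)
    (h0 : (a 0).natAbs = 1) (hnatop : (a n).natAbs = 1) :
    Irreducible (∑ i ∈ Finset.range (n + 1),
      C ((a i : ℚ) / (i.factorial : ℚ)) * X ^ i) := by
  set f : ℚ[X] := ∑ i ∈ Finset.range (n + 1), C ((a i : ℚ) / (i.factorial : ℚ)) * X ^ i with hf
  have hcoeff : ∀ i, f.coeff i = if i ≤ n then (a i : ℚ) / (i.factorial : ℚ) else 0 := by
    intro i
    simp only [hf, finsetSum_coeff, coeff_C_mul, coeff_X_pow, mul_ite, mul_one, mul_zero,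
      Finset.sum_ite_eq, Finset.mem_range, Nat.lt_succ_iff]
  have han : (a n : ℚ) ≠ 0 := by
    intro h
    rw [Int.cast_eq_zero] at h
    simp [h] at hnatop
  have hfn : f.coeff n ≠ 0 := by
    rw [hcoeff, if_pos le_rfl]
    exact div_ne_zero han (by exact_mod_cast Nat.factorial_ne_zero n)
  have hfd : f.natDegree = n := by
    apply natDegree_eq_of_le_of_coeff_ne_zero _ hfn
    rw [natDegree_le_iff_coeff_eq_zero]
    intro i hi
    rw [hcoeff, if_neg (by omega)]
  have hf0 : f ≠ 0 := by
    intro h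
    rw [h] at hfn
    simp at hfn
  have hfu : ¬ IsUnit f := by
    intro h
    have := natDegree_eq_zero_of_isUnit h
    omega
  rw [irreducible_iff_lt_natDegree_lt hf0 hfu]
  intro q hq hqd hqf
  rw [Finset.mem_Ioc, hfd] at hqd
  obtain ⟨g, hg, hgi, hgq⟩ := exists_monic_irreducible_factor q (by
    intro h
    have := natDegree_eq_zero_of_isUnit h
    omega)
  have hgd : g.natDegree ≤ q.natDegree := natDegree_le_of_dvd hgq hq.ne_zero
  have hgpos : 0 < g.natDegree := hgi.natDegree_pos
  have : Fact (Irreducible g) := ⟨hgi⟩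
  have : CharZero (AdjoinRoot g) := charZero_of_injective_algebraMap (algebraMap ℚ _).injective
  let pb := AdjoinRoot.powerBasis hgi.ne_zero
  have : FiniteDimensional ℚ (AdjoinRoot g) := pb.finite
  have : NumberField (AdjoinRoot g) := ⟨⟩
  have hroot : aeval (AdjoinRoot.root g) f = 0 := by
    obtain ⟨r, hr⟩ := hgq.trans hqf
    have h1 : aeval (AdjoinRoot.root g) g = 0 := by
      rw [aeval_def]
      exact AdjoinRoot.eval₂_root g
    rw [hr, map_mul, h1, zero_mul]
  refine sch_core pb n g.natDegree ?_ hgpos (by omega) a h0 hnatop ?_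
  · rw [pb.finrank]; rfl
  · rw [← hroot, hf]
    simp [pb]
end

section
/- (Sylvester–Schur) Let m and k be positive integers with m ≥ k. Then there exists a prime p with p ≥ k+1 which divides one of the integers m+1, m+2, …, m+k. -/
namespace SylSch

lemma beqF {a b : ℕ} : (Nat.beq a b = false) = (a ≠ b) := by
  rw [← Bool.not_eq_true, Nat.beq_eq]

/-- trial division by all `d ≤ B` -/
def tr (n : ℕ) : ℕ → Bool
  | 0 => true
  | d + 1 => (Nat.ble (d + 1) 1 || Nat.ble n (d + 1) || !(Nat.beq (n % (d + 1)) 0)) && tr n d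

lemma tr_spec (n : ℕ) : ∀ B, tr n B = true → ∀ d, 2 ≤ d → d ≤ B → d < n → ¬ d ∣ n := by
  intro B
  induction B with
  | zero => intro _ d h2 h0; omega
  | succ B ih =>
    intro h d h2 hB hn hd
    simp only [tr, Bool.and_eq_true, Bool.or_eq_true, Nat.ble_eq, Bool.not_eq_true',
      beqF] at h
    rcases Nat.lt_or_ge d (B + 1) with h' | h'
    · exact ih h.2 d h2 (by omega) hn hd
    · obtain rfl : d = B + 1 := by omega
      rcases h.1 with (h1 | h1) | h1
      · omega
      · omega
      · exact h1 (Nat.mod_eq_zero_of_dvd hd)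

/-- product of the primes below 850 -/
def bigP : ℕ :=
  119441917873736754279624327669622620301969241768512770400437256821933352749330328753786286198874332289529880150835530805201173704974832847616867321322566900795516719658084998781656977298254261410976595364742312728096616387897376595450190004194312760593065814057759204404624844239838479726294898178933479869263942643734800024833814591057083385099218990

lemma bigP_spec : ((List.range 850).all fun d => Nat.ble d 1 || Nat.blt 1 (Nat.gcd d bigP)) = true := by
  decide +kernel

/-- primality checker, for `n < 850 ^ 2` -/
def isPr (n : ℕ) : Bool :=
  Nat.ble 2 n && (cond (Nat.blt n 900) (tr n 30) (Nat.blt n 722500 && Nat.beq (Nat.gcd n bigP) 1))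

lemma isPr_spec {n : ℕ} (h : isPr n = true) : n.Prime := by
  simp only [isPr, Bool.and_eq_true, Nat.ble_eq, Nat.blt] at h
  obtain ⟨h2, h⟩ := h
  rw [Nat.prime_def_le_sqrt]
  refine ⟨h2, fun d hd hs => ?_⟩
  by_cases hn : n < 900
  · rw [show Nat.ble n.succ 900 = true from Nat.ble_eq ▸ hn] at h
    refine tr_spec n 30 h d hd ?_ ?_
    · have := Nat.sqrt_lt.2 (show n < 30 * 30 by omega)
      omega
    · exact lt_of_le_of_lt hs (Nat.sqrt_lt_self (by omega))
  · rw [show Nat.ble n.succ 900 = false by simpa [← Bool.not_eq_true] using hn] at h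
    simp only [cond_false, Bool.and_eq_true, Nat.ble_eq, Nat.beq_eq] at h
    have hd' : d < 850 := by
      have := Nat.sqrt_lt.2 (show n < 850 * 850 by omega)
      omega
    have h1 := bigP_spec
    rw [List.all_eq_true] at h1
    have h1 := h1 d (List.mem_range.2 hd')
    simp only [Bool.or_eq_true, Nat.blt, Nat.ble_eq] at h1
    intro hdn
    have h3 : Nat.gcd d bigP ∣ Nat.gcd n bigP := Nat.gcd_dvd_gcd_of_dvd_left _ hdn
    rw [h.2] at h3
    have := Nat.le_of_dvd one_pos h3
    omega

def chainOk : ℕ → List ℕ → Bool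
  | _, [] => true
  | q, r :: l => isPr r && Nat.ble ((r - 1 - q) ^ 3) (q ^ 2) && chainOk r l

lemma chain_spec (n k : ℕ) (hnk : n ^ 2 ≤ k ^ 3) (hk : k ≤ n) (hk0 : 0 < k) : ∀ (l : List ℕ) (q : ℕ), q.Prime → chainOk q l = true →
    q ≤ n → n < (l.getLastD q) → ∃ p, p.Prime ∧ n - k < p ∧ p ≤ n := by
  intro l
  induction l with
  | nil => intro q _ _ h1 h2; simp at h2; omega
  | cons r l ih =>
    intro q hq hc h1 h2
    simp only [chainOk, Bool.and_eq_true, Nat.ble_eq] at hc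
    rw [List.getLastD_cons] at h2
    by_cases hr : r ≤ n
    · exact ih r (isPr_spec hc.1.1) hc.2 hr h2
    · refine ⟨q, hq, ?_, h1⟩
      by_contra hcon
      have h3 : k ≤ n - q := by omega
      have h4 : k ≤ r - 1 - q := by omega
      have h5 : k ^ 3 ≤ (r - 1 - q) ^ 3 := Nat.pow_le_pow_left h4 3
      have h6 : q < n := by omega
      have h7 : q ^ 2 < n ^ 2 := Nat.pow_lt_pow_left h6 (by norm_num)
      omega

def chainList : List ℕ := 
  [73, 89, 109, 131, 157, 181, 211, 241, 277, 317, 359, 409, 463, 523, 587, 653, 727, 797, 883,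
  971, 1069, 1171, 1283, 1399, 1523, 1637, 1759, 1901, 2053, 2213, 2383, 2557, 2741, 2927, 3121,
  3331, 3547, 3779, 4021, 4273, 4523, 4793, 5077, 5351, 5657, 5953, 6277, 6607, 6959, 7321,
  7699, 8089, 8467, 8867, 9293, 9733, 10181, 10651, 11131, 11621, 12119, 12647, 13187, 13729,
  14303, 14891, 15497, 16111, 16747, 17401, 18061, 18749, 19447, 20161, 20899, 21649, 22409,
  23203, 24007, 24821, 25667, 26513, 27397, 28297, 29221, 30169, 31139, 32119, 33119, 34147,
  35171, 36241, 37337, 38453, 39581, 40739, 41911, 43117, 44293, 45541, 46817, 48109, 49429,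
  50773, 52127, 53507, 54919, 56359, 57829, 59281, 60793, 62327, 63863, 65449, 67073, 68713,
  70381, 72077, 73783, 75541, 77323, 79133, 80963, 82813, 84713, 86629, 88547, 90533, 92507,
  94547, 96601, 98689, 100823, 102983, 105173, 107377, 109621, 111893, 114203, 116549, 118931,
  121349, 123791, 126271, 128767, 131317, 133877, 136483, 139133, 141811, 144511, 147263,
  150041, 152857, 155707, 158597, 161527, 164477, 167471, 170509, 173573, 176677, 179821,
  182999, 186211, 189467, 192757, 196087, 199457, 202859, 206303, 209789, 213319, 216877,
  220471, 224113, 227797, 231503, 235273, 239081, 242927, 246817, 250751, 254713, 258721,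
  262781, 266867, 271013, 275201, 279431, 283697, 288007, 292367, 296773, 301219, 305663,
  310187, 314761, 319387, 324053, 328753, 333517, 338323, 343177, 348077, 353021, 357997,
  363037, 368117, 373231, 378407, 383633, 388903, 394223, 399587, 405011, 410477, 415999,
  421559, 427181, 432847, 438569, 444341, 450161, 456023, 461933, 467903, 473929, 479971,
  486091, 492257, 498469, 504727, 511061, 517417, 523847, 530339, 536891, 543497, 550139,
  556849, 563599, 570421, 577279, 584203, 591181, 598219, 605309, 612439, 619621, 626887,
  634211, 641581, 649007, 656483, 664019, 671609, 679279, 687007, 694789, 702623, 710527,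
  718463]

set_option maxRecDepth 100000 in
lemma chain_ok : chainOk 73 chainList = true := by decide +kernel

lemma finite_range (n k : ℕ) (hnk : n ^ 2 ≤ k ^ 3) (hk : k ≤ n) (hk0 : 0 < k)
    (h73 : 73 ≤ n) (hk8 : k ≤ 8000) : ∃ p, p.Prime ∧ n - k < p ∧ p ≤ n := by
  refine chain_spec n k hnk hk hk0 chainList 73 (by norm_num) chain_ok h73 ?_
  have h1 : k ^ 3 ≤ 8000 ^ 3 := Nat.pow_le_pow_left hk8 3
  have h2 : n < 718463 := by
    by_contra h
    have : 718463 ^ 2 ≤ n ^ 2 := Nat.pow_le_pow_left (by omega) 2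
    omega
  exact h2

/-- direct verification for small values -/
def smallPrimes : List ℕ :=
  [2, 3, 5, 7, 11, 13, 17, 19, 23, 29, 31, 37, 41, 43, 47, 53, 59, 61, 67, 71, 73, 79, 83, 89, 97,
  101, 103, 107, 109, 113, 127, 131, 137, 139, 149, 151, 157, 163, 167, 173, 179, 181, 191, 193,
  197, 199]

lemma smallPrimes_ok : (smallPrimes.all isPr) = true := by decide +kernel


def smallOk (n k : ℕ) : Bool :=
  smallPrimes.any fun p => Nat.blt k p && Nat.ble p n && Nat.blt (n % p) k

lemma smallAll : ((List.range 37).all fun k => (List.range 210).all fun n =>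
    Nat.beq k 0 || Nat.blt n (2 * k) || smallOk n k) = true := by decide +kernel

lemma small_range (n k : ℕ) (hk : k < 37) (hn : n < 210) (hk0 : 0 < k) (hkn : 2 * k ≤ n) :
    ∃ p, p.Prime ∧ k < p ∧ ∃ j < k, p ∣ n - j := by
  have h := smallAll
  rw [List.all_eq_true] at h
  have h := h k (List.mem_range.2 hk)
  rw [List.all_eq_true] at h
  have h := h n (List.mem_range.2 hn)
  simp only [Bool.or_eq_true, Nat.beq_eq, Nat.blt, Nat.ble_eq] at h
  rcases h with (h | h) | h
  · omega
  · omega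
  · simp only [smallOk, List.any_eq_true,
      Bool.and_eq_true, Nat.blt, Nat.ble_eq] at h
    obtain ⟨p, h3, ⟨h1, h2⟩, h4⟩ := h
    have h3 := List.all_eq_true.1 smallPrimes_ok p h3
    exact ⟨p, isPr_spec h3, h1, n % p, h4, Nat.dvd_sub_mod n⟩

/-- an upper bound of the prime counting function -/
def cnt : ℕ → ℕ
  | 0 => 0
  | n + 1 => cnt n + cond (Nat.beq n 1 || Nat.beq n 2 || Nat.beq n 4 || Nat.beq n 6 ||
      !(Nat.beq ((n+1) % 2) 0 || Nat.beq ((n+1) % 3) 0 || Nat.beq ((n+1) % 5) 0 || Nat.beq ((n+1) % 7) 0 || Nat.beq n 0)) 1 0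

lemma pi_le_cnt (n : ℕ) : Nat.primeCounting n ≤ cnt n := by
  induction n with
  | zero => simp
  | succ n ih =>
    rw [Nat.primeCounting, Nat.primeCounting', Nat.count_succ]
    rw [Nat.primeCounting, Nat.primeCounting'] at ih
    simp only [cnt]
    refine add_le_add ih ?_
    split_ifs with hp
    · have h1 : n ≠ 0 := by rintro rfl; norm_num at hp
      have hd : ∀ q, q.Prime → q ∣ n + 1 → n + 1 = q := fun q hq h =>
        ((Nat.prime_dvd_prime_iff_eq hq hp).1 h).symm
      have := hd 2 (by norm_num)
      have := hd 3 (by norm_num)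
      have := hd 5 (by norm_num)
      have := hd 7 (by norm_num)
      simp only [Bool.cond_eq_ite]
      rw [if_pos]
      simp only [Bool.or_eq_true, Nat.beq_eq, Bool.not_eq_true', Bool.or_eq_false_iff, beqF]
      omega
    · simp

lemma cnt_small : ((List.range 37).all fun k => Nat.beq k 0 || Nat.blt (k ^ k) (210 ^ (k - cnt k))) = true := by
  decide +kernel

lemma cnt_mid : ((List.range 400).all fun k => Nat.blt k 37 || Nat.ble (3 * cnt k) k) = true := by
  decide +kernel

lemma pi_210 : Nat.primeCounting 210 ≤ 60 := (pi_le_cnt 210).trans (by decide +kernel)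
lemma pi_30 : Nat.primeCounting 30 ≤ 10 := (pi_le_cnt 30).trans (by decide +kernel)

lemma pi_third (k : ℕ) (hk : 37 ≤ k) : 3 * Nat.primeCounting k ≤ k := by
  by_cases h : k < 400
  · have h1 := cnt_mid
    rw [List.all_eq_true] at h1
    have h1 := h1 k (List.mem_range.2 h)
    simp only [Bool.or_eq_true, Nat.blt, Nat.ble_eq] at h1
    have := pi_le_cnt k
    omega
  · obtain ⟨j, rfl⟩ : ∃ j, k = 30 + j := ⟨k - 30, by omega⟩
    have h2 := Nat.primeCounting_add_le (a := 30) (k := 30) (by norm_num) le_rfl j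
    have h3 : Nat.totient 30 = 8 := by decide +kernel
    have := pi_30
    rw [h3] at h2
    omega

lemma pi_quarter (k : ℕ) (hk : 8000 ≤ k) : 4 * Nat.primeCounting k ≤ k := by
  obtain ⟨j, rfl⟩ : ∃ j, k = 210 + j := ⟨k - 210, by omega⟩
  have h2 := Nat.primeCounting_add_le (a := 210) (k := 210) (by norm_num) le_rfl j
  have h3 : Nat.totient 210 = 48 := by decide +kernel
  have := pi_210
  rw [h3] at h2
  omega

lemma cnt_small' (k : ℕ) (hk : k < 37) (h0 : 0 < k) :
    k ^ k < 210 ^ (k - Nat.primeCounting k) := by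
  have h1 := cnt_small
  rw [List.all_eq_true] at h1
  have h1 := h1 k (List.mem_range.2 hk)
  simp only [Bool.or_eq_true, Nat.blt, Nat.ble_eq, Nat.beq_eq] at h1
  rcases h1 with h1 | h1
  · omega
  · have := pi_le_cnt k
    exact lt_of_lt_of_le h1 (Nat.pow_le_pow_right (by norm_num) (by omega))


/-- lower bound `(n/k)^k ≤ C(n,k)` -/
lemma pow_le_choose_mul (n k : ℕ) (hkn : k ≤ n) : n ^ k ≤ Nat.choose n k * k ^ k := by
  have key : ∀ j ≤ k, n ^ j * Nat.descFactorial k j ≤ Nat.descFactorial n j * k ^ j := by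
    intro j
    induction j with
    | zero => simp
    | succ j ih =>
      intro hj
      have h1 := ih (by omega)
      rw [Nat.descFactorial_succ, Nat.descFactorial_succ, pow_succ, pow_succ]
      have h2 : n * (k - j) ≤ (n - j) * k := by
        zify [show j ≤ k by omega, show j ≤ n by omega]
        have : (k : ℤ) ≤ n := by exact_mod_cast hkn
        have : (0 : ℤ) ≤ j := by positivity
        nlinarith
      calc n ^ j * n * ((k - j) * k.descFactorial j)
          = (n ^ j * k.descFactorial j) * (n * (k - j)) := by ring
        _ ≤ (n.descFactorial j * k ^ j) * ((n - j) * k) := Nat.mul_le_mul h1 h2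
        _ = _ := by ring
  have h := key k le_rfl
  rw [Nat.descFactorial_self, Nat.descFactorial_eq_factorial_mul_choose] at h
  refine Nat.le_of_mul_le_mul_right (c := k.factorial) ?_ (Nat.factorial_pos k)
  calc _ ≤ _ := h
    _ = _ := by ring

lemma choose_eq_prod (n k : ℕ) (hkn : k ≤ n) (H : ∀ p, p.Prime → p ∣ Nat.choose n k → p ≤ k) :
    Nat.choose n k = ∏ p ∈ Nat.primesLE k, p ^ (Nat.choose n k).factorization p := by
  conv_lhs => rw [← Nat.prod_factorization_pow_eq_self (Nat.choose_ne_zero hkn)]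
  apply Finset.prod_subset
  · intro p hp
    rw [Nat.support_factorization, Nat.mem_primeFactors] at hp
    rw [Nat.mem_primesLE]
    exact ⟨H p hp.1 hp.2.1, hp.1⟩
  · intro p _ h2
    simp [Classical.not_not.1 (mt Finsupp.mem_support_iff.2 h2)]

lemma choose_le_pow_pi (n k : ℕ) (hn : 0 < n) (hkn : k ≤ n)
    (H : ∀ p, p.Prime → p ∣ Nat.choose n k → p ≤ k) :
    Nat.choose n k ≤ n ^ Nat.primeCounting k := by
  rw [choose_eq_prod n k hkn H, ← Nat.primesLE_card_eq_primeCounting]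
  exact Finset.prod_le_pow_card _ _ _ fun p _ => Nat.pow_factorization_choose_le hn

lemma choose_le_split (n k u : ℕ) (hn : 0 < n) (hkn : k ≤ n)
    (H : ∀ p, p.Prime → p ∣ Nat.choose n k → p ≤ k)
    (hu : ∀ p, p.Prime → Nat.sqrt n < p → p ∣ Nat.choose n k → p ≤ u) :
    Nat.choose n k ≤ n ^ Nat.primeCounting (Nat.sqrt n) * 4 ^ u := by
  rw [choose_eq_prod n k hkn H,
    ← Finset.prod_filter_mul_prod_filter_not (Nat.primesLE k) (fun p => p ≤ Nat.sqrt n)]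
  refine Nat.mul_le_mul ?_ ?_
  · calc _ ≤ n ^ (Finset.card _) :=
          Finset.prod_le_pow_card _ _ _ fun p _ => Nat.pow_factorization_choose_le hn
      _ ≤ _ := by
        refine Nat.pow_le_pow_right hn ?_
        rw [← Nat.primesLE_card_eq_primeCounting]
        refine Finset.card_le_card fun p hp => ?_
        rw [Finset.mem_filter, Nat.mem_primesLE] at hp
        rw [Nat.mem_primesLE]
        exact ⟨hp.2, hp.1.2⟩
  · refine le_trans ?_ (primorial_le_four_pow u)
    rw [primorial_eq_prod_primesLE]
    calc _ ≤ ∏ p ∈ (Nat.primesLE k).filter (fun p => ¬ p ≤ Nat.sqrt n),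
            (if p ∣ Nat.choose n k then p else 1) := by
          refine Finset.prod_le_prod' fun p hp => ?_
          rw [Finset.mem_filter, Nat.mem_primesLE] at hp
          split_ifs with hd
          · have h1 : (Nat.choose n k).factorization p ≤ 1 := by
              refine Nat.factorization_choose_le_one ?_
              have := Nat.sqrt_lt.1 (not_le.1 hp.2)
              rw [sq]; exact this
            calc _ ≤ p ^ 1 := Nat.pow_le_pow_right hp.1.2.pos h1
              _ = p := pow_one p
          · rw [Nat.factorization_eq_zero_of_not_dvd hd, pow_zero]
      _ = ∏ p ∈ ((Nat.primesLE k).filter (fun p => ¬ p ≤ Nat.sqrt n)).filter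
            (fun p => p ∣ Nat.choose n k), p := (Finset.prod_filter _ _).symm
      _ ≤ _ := by
          refine Finset.prod_le_prod_of_subset_of_one_le' (fun p hp => ?_) fun p hp _ => ?_
          · rw [Finset.mem_filter, Finset.mem_filter, Nat.mem_primesLE] at hp
            rw [Nat.mem_primesLE]
            exact ⟨hu p hp.1.1.2 (not_le.1 hp.1.2) hp.2, hp.1.1.2⟩
          · rw [Nat.mem_primesLE] at hp
            exact hp.2.pos

/-- `C(2k+t,k) (3/5)^t ≥ C(2k,k)` for `2t ≤ k` -/
lemma choose_growth (k : ℕ) : ∀ t, 2 * t ≤ k →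
    5 ^ t * Nat.choose (2 * k) k ≤ 3 ^ t * Nat.choose (2 * k + t) k := by
  intro t
  induction t with
  | zero => simp
  | succ t ih =>
    intro ht
    have h1 := ih (by omega)
    have h2 := Nat.choose_mul_succ_eq (2 * k + t) k
    have h3 : 2 * k + t + 1 - k = k + t + 1 := by omega
    rw [h3] at h2
    have h4 : 5 * Nat.choose (2 * k + t) k ≤ 3 * Nat.choose (2 * k + (t + 1)) k := by
      refine Nat.le_of_mul_le_mul_right (c := k + t + 1) ?_ (by omega)
      calc 5 * Nat.choose (2 * k + t) k * (k + t + 1)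
          = Nat.choose (2 * k + t) k * (5 * (k + t + 1)) := by ring
        _ ≤ Nat.choose (2 * k + t) k * (3 * (2 * k + t + 1)) :=
            Nat.mul_le_mul_left _ (by omega)
        _ = 3 * (Nat.choose (2 * k + t) k * (2 * k + t + 1)) := by ring
        _ = 3 * Nat.choose (2 * k + (t + 1)) k * (k + t + 1) := by rw [h2, ← add_assoc]; ring
    calc 5 ^ (t + 1) * Nat.choose (2 * k) k = 5 * (5 ^ t * Nat.choose (2 * k) k) := by ring
      _ ≤ 5 * (3 ^ t * Nat.choose (2 * k + t) k) := Nat.mul_le_mul_left _ h1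
      _ = 3 ^ t * (5 * Nat.choose (2 * k + t) k) := by ring
      _ ≤ 3 ^ t * (3 * Nat.choose (2 * k + (t + 1)) k) := Nat.mul_le_mul_left _ h4
      _ = _ := by ring

lemma pi_third' (s : ℕ) : 3 * Nat.primeCounting s ≤ s + 6 := by
  by_cases h : 37 ≤ s
  · have := pi_third s h; omega
  · have h1 := pi_le_cnt s
    have h2 : ((List.range 37).all fun k => Nat.ble (3 * cnt k) (k + 6)) = true := by
      decide +kernel
    rw [List.all_eq_true] at h2
    have h2 := h2 s (List.mem_range.2 (by omega))
    simp only [Nat.ble_eq] at h2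
    omega

/-- the main analytic inequality -/
lemma main_ineq (n k : ℕ) (hk : 8000 ≤ k) (hn : 2 * k ≤ n) (hnk : n ^ 3 ≤ k ^ 4) :
    Real.log (2 * k) + Nat.primeCounting (Nat.sqrt n) * Real.log n <
      ((k : ℝ) - 1) / 6 * Real.log 4 := by
  set y : ℝ := (k : ℝ) ^ ((1 : ℝ) / 3) with hy
  have hk0 : (0 : ℝ) ≤ k := by positivity
  have hkR : (8000 : ℝ) ≤ k := by exact_mod_cast hk
  have hy3 : y ^ 3 = k := by
    rw [hy, ← Real.rpow_natCast, ← Real.rpow_mul hk0]; norm_num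
  have hy0 : 0 ≤ y := Real.rpow_nonneg hk0 _
  have hy20 : 20 ≤ y := by
    by_contra h
    push Not at h
    have : y ^ 3 < 20 ^ 3 := pow_lt_pow_left₀ h hy0 (by norm_num)
    rw [hy3] at this; linarith
  have hn0 : (0 : ℝ) < n := by
    have : 0 < n := by omega
    exact_mod_cast this
  have hny : (n : ℝ) ≤ y ^ 4 := by
    have h1 : (n : ℝ) ^ 3 ≤ (k : ℝ) ^ 4 := by exact_mod_cast hnk
    have h2 : (n : ℝ) ^ 3 ≤ (y ^ 4) ^ 3 := by
      calc (n : ℝ) ^ 3 ≤ (k : ℝ) ^ 4 := h1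
        _ = (y ^ 4) ^ 3 := by rw [← hy3]; ring
    exact le_of_pow_le_pow_left₀ (by norm_num) (by positivity) h2
  have hs : (Nat.sqrt n : ℝ) ≤ y ^ 2 := by
    have h1 : ((Nat.sqrt n : ℕ) : ℝ) ^ 2 ≤ n := by
      exact_mod_cast Nat.sqrt_le' n
    have h2 : ((Nat.sqrt n : ℕ) : ℝ) ^ 2 ≤ (y ^ 2) ^ 2 := by
      calc _ ≤ _ := h1
        _ ≤ _ := hny
        _ = _ := by ring
    exact le_of_pow_le_pow_left₀ (by norm_num) (by positivity) h2
  have hpi : (Nat.primeCounting (Nat.sqrt n) : ℝ) ≤ (y ^ 2 + 6) / 3 := by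
    have h1 : (3 : ℝ) * Nat.primeCounting (Nat.sqrt n) ≤ Nat.sqrt n + 6 := by
      exact_mod_cast pi_third' (Nat.sqrt n)
    linarith
  have hlog2 := Real.log_two_gt_d9
  have hlog2' := Real.log_two_lt_d9
  have hlog4 : Real.log 4 = 2 * Real.log 2 := by
    rw [show (4 : ℝ) = 2 ^ 2 by norm_num, Real.log_pow]; norm_num
  have hlogy : Real.log y ≤ y / 16 + 1.7726 := by
    have h1 : Real.log (y / 16) ≤ y / 16 - 1 := Real.log_le_sub_one_of_pos (by positivity)
    rw [Real.log_div (by positivity) (by norm_num), show (16 : ℝ) = 2 ^ 4 by norm_num,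
      Real.log_pow] at h1
    norm_num at h1
    linarith
  have hlogy0 : 0 ≤ Real.log y := Real.log_nonneg (by linarith)
  have hlogn : Real.log n ≤ 4 * Real.log y := by
    calc Real.log n ≤ Real.log (y ^ 4) := Real.log_le_log hn0 hny
      _ = _ := by rw [Real.log_pow]; norm_num
  have hlogn0 : 0 ≤ Real.log n := Real.log_natCast_nonneg n
  have hlogk : Real.log (2 * k) ≤ Real.log n := by
    refine Real.log_le_log (by linarith) ?_
    exact_mod_cast hn
  have hA : Real.log (2 * k) + Nat.primeCounting (Nat.sqrt n) * Real.log n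
      ≤ ((y ^ 2 + 6) / 3 + 1) * (4 * (y / 16 + 1.7726)) := by
    calc _ ≤ Real.log n + (y ^ 2 + 6) / 3 * Real.log n := by gcongr
      _ = ((y ^ 2 + 6) / 3 + 1) * Real.log n := by ring
      _ ≤ _ := by
        refine mul_le_mul_of_nonneg_left ?_ (by positivity)
        linarith
  refine lt_of_le_of_lt hA ?_
  rw [hlog4, ← hy3]
  have hB : (y ^ 3 - 1) / 6 * (2 * 0.693) ≤ (y ^ 3 - 1) / 6 * (2 * Real.log 2) := by
    have : 0 ≤ (y ^ 3 - 1) / 6 := by rw [hy3]; linarith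
    refine mul_le_mul_of_nonneg_left ?_ this
    linarith
  refine lt_of_lt_of_le ?_ hB
  clear_value y
  obtain ⟨z, rfl⟩ : ∃ z, y = z + 20 := ⟨y - 20, by ring⟩
  have hz : 0 ≤ z := by linarith
  have := pow_nonneg hz 2
  have := pow_nonneg hz 3
  nlinarith

lemma large_case (n k : ℕ) (hk : 8000 ≤ k) (hn : 2 * k ≤ n) (hnk : n ^ 3 ≤ k ^ 4)
    (H : ∀ p, p.Prime → p ∣ Nat.choose n k → p ≤ k) : False := by
  have hmain := main_ineq n k hk hn hnk
  have hn0 : (0 : ℝ) < n := by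
    have : 0 < n := by omega
    exact_mod_cast this
  have hk0 : (0 : ℝ) < k := by
    have : 0 < k := by omega
    exact_mod_cast this
  have hl4 : 0 < Real.log 4 := Real.log_pos (by norm_num)
  rw [Real.log_mul (by positivity) (by positivity)] at hmain
  have hcen := Nat.four_pow_le_two_mul_self_mul_centralBinom k (by omega)
  rw [Nat.centralBinom_eq_two_mul_choose] at hcen
  by_cases hc : 2 * n < 5 * k
  · have h1 := choose_le_split n k (n / 3) (by omega) (by omega) H (by
      intro p hp hs hd
      by_contra hcon
      have hpk := H p hp hd
      have hp2 : p ≠ 2 := by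
        rintro rfl
        omega
      have h0 := Nat.factorization_choose_of_lt_three_mul (n := n) (k := k) hp2 hpk
        (by omega) (by omega)
      have := hp.factorization_pos_of_dvd (Nat.choose_ne_zero (by omega)) hd
      omega)
    have h2 : Nat.choose (2 * k) k ≤ Nat.choose n k := Nat.choose_le_choose k hn
    have h3 : 4 ^ k ≤ 2 * k * (n ^ Nat.primeCounting (Nat.sqrt n) * 4 ^ (n / 3)) :=
      hcen.trans (Nat.mul_le_mul_left _ (h2.trans h1))
    have h4 : (4 : ℝ) ^ k ≤ 2 * k * (n ^ Nat.primeCounting (Nat.sqrt n) * 4 ^ (n / 3)) := by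
      exact_mod_cast h3
    have h5 := Real.log_le_log (by positivity) h4
    rw [Real.log_mul (by positivity) (by positivity), Real.log_mul (by positivity) (by positivity),
      Real.log_mul (by positivity) (by positivity), Real.log_pow, Real.log_pow, Real.log_pow] at h5
    have h6 : ((n / 3 : ℕ) : ℝ) ≤ 5 * k / 6 := by
      have : 6 * (n / 3) ≤ 5 * k := by omega
      have : (6 : ℝ) * ((n / 3 : ℕ) : ℝ) ≤ 5 * k := by exact_mod_cast this
      linarith
    have h7 := mul_le_mul_of_nonneg_right h6 hl4.le
    nlinarith
  · have h1 := choose_le_split n k k (by omega) (by omega) H (fun p hp _ hd => H p hp hd)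
    have hg := choose_growth k (k / 2) (by omega)
    have h2 : Nat.choose (2 * k + k / 2) k ≤ Nat.choose n k := Nat.choose_le_choose k (by omega)
    have h3 : 5 ^ (k / 2) * 4 ^ k ≤
        3 ^ (k / 2) * (2 * k * (n ^ Nat.primeCounting (Nat.sqrt n) * 4 ^ k)) := by
      calc 5 ^ (k / 2) * 4 ^ k ≤ 5 ^ (k / 2) * (2 * k * Nat.choose (2 * k) k) :=
            Nat.mul_le_mul_left _ hcen
        _ = 2 * k * (5 ^ (k / 2) * Nat.choose (2 * k) k) := by ring
        _ ≤ 2 * k * (3 ^ (k / 2) * (n ^ Nat.primeCounting (Nat.sqrt n) * 4 ^ k)) :=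
            Nat.mul_le_mul_left _ (hg.trans (Nat.mul_le_mul_left _ (h2.trans h1)))
        _ = _ := by ring
    have h4 : (5 : ℝ) ^ (k / 2) * 4 ^ k ≤
        3 ^ (k / 2) * (2 * k * (n ^ Nat.primeCounting (Nat.sqrt n) * 4 ^ k)) := by
      exact_mod_cast h3
    have h5 := Real.log_le_log (by positivity) h4
    rw [Real.log_mul (by positivity) (by positivity), Real.log_mul (by positivity) (by positivity),
      Real.log_mul (by positivity) (by positivity), Real.log_mul (by positivity) (by positivity),
      Real.log_mul (by positivity) (by positivity),
      Real.log_pow, Real.log_pow, Real.log_pow, Real.log_pow] at h5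
    have h6 : ((k : ℝ) - 1) / 2 ≤ ((k / 2 : ℕ) : ℝ) := by
      have : k ≤ 2 * (k / 2) + 1 := by omega
      have : (k : ℝ) ≤ 2 * ((k / 2 : ℕ) : ℝ) + 1 := by exact_mod_cast this
      linarith
    have h7 : Real.log 4 + 3 * Real.log 3 ≤ 3 * Real.log 5 := by
      have : Real.log (4 * 3 ^ 3) ≤ Real.log (5 ^ 3) := Real.log_le_log (by norm_num) (by norm_num)
      rw [Real.log_mul (by norm_num) (by norm_num), Real.log_pow, Real.log_pow] at this
      exact_mod_cast this
    have h8 : ((k : ℝ) - 1) / 2 * (Real.log 4 / 3)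
        ≤ ((k / 2 : ℕ) : ℝ) * (Real.log 5 - Real.log 3) := by
      refine mul_le_mul h6 (by linarith) (by positivity) (by positivity)
    linarith

lemma core (n k : ℕ) (hk : 0 < k) (hn : 2 * k ≤ n)
    (H : ∀ p, p.Prime → p ∣ Nat.choose n k → p ≤ k)
    (H1 : ¬ ∃ p, p.Prime ∧ n - k < p ∧ p ≤ n)
    (H2 : ¬ ∃ p, p.Prime ∧ k < p ∧ ∃ j < k, p ∣ n - j) : False := by
  have hA : n ^ k ≤ n ^ Nat.primeCounting k * k ^ k :=
    (pow_le_choose_mul n k (by omega)).trans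
      (Nat.mul_le_mul_right _ (choose_le_pow_pi n k (by omega) (by omega) H))
  have gen : ∀ c, (c + 1) * Nat.primeCounting k ≤ k → n ^ c ≤ k ^ (c + 1) := by
    intro c hc
    have h1 : (n ^ k) ^ (c + 1) ≤ (n ^ Nat.primeCounting k * k ^ k) ^ (c + 1) :=
      Nat.pow_le_pow_left hA _
    have h2 : n ^ (Nat.primeCounting k * (c + 1)) ≤ n ^ k :=
      Nat.pow_le_pow_right (by omega) (by rw [mul_comm]; exact hc)
    have h3 : n ^ k * (n ^ c) ^ k ≤ n ^ k * (k ^ (c + 1)) ^ k := by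
      calc n ^ k * (n ^ c) ^ k = (n ^ k) ^ (c + 1) := by ring
        _ ≤ _ := h1
        _ = n ^ (Nat.primeCounting k * (c + 1)) * (k ^ (c + 1)) ^ k := by
            rw [mul_pow, ← pow_mul, ← pow_mul, ← pow_mul, mul_comm k (c + 1)]
        _ ≤ _ := Nat.mul_le_mul_right _ h2
    have h4 := Nat.le_of_mul_le_mul_left h3 (pow_pos (by omega) k)
    exact (Nat.pow_le_pow_iff_left (by omega)).1 h4
  by_cases hk37 : k < 37
  · by_cases hn210 : n < 210
    · exact H2 (small_range n k hk37 hn210 hk hn)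
    · have h1 := cnt_small' k hk37 hk
      have h2 : 210 ^ (k - Nat.primeCounting k) ≤ n ^ (k - Nat.primeCounting k) :=
        Nat.pow_le_pow_left (by omega) _
      have hle : Nat.primeCounting k ≤ k := by
        by_contra h
        rw [Nat.sub_eq_zero_of_le (by omega), pow_zero] at h1
        have := Nat.pow_pos (n := k) hk
        omega
      have h3 : n ^ Nat.primeCounting k * n ^ (k - Nat.primeCounting k)
          ≤ n ^ Nat.primeCounting k * k ^ k := by
        rw [← pow_add, Nat.add_sub_of_le hle]; exact hA
      have h4 := Nat.le_of_mul_le_mul_left h3 (pow_pos (by omega) _)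
      omega
  · by_cases hk8 : k ≤ 8000
    · exact H1 (finite_range n k (gen 2 (pi_third k (by omega))) (by omega) hk (by omega) hk8)
    · exact large_case n k (by omega) hn (gen 3 (pi_quarter k (by omega))) H

end SylSch

/-- **Sylvester–Schur theorem.** Let `m ≥ k` be positive integers. Then there is a
prime `p ≥ k + 1` dividing one of the integers `m + 1, m + 2, …, m + k`. -/
theorem sylvester_schur (m k : ℕ) (hm : 0 < m) (hk : 0 < k) (hkm : k ≤ m) :
    ∃ p : ℕ, p.Prime ∧ k + 1 ≤ p ∧ ∃ i, 1 ≤ i ∧ i ≤ k ∧ p ∣ (m + i) := by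
  by_contra hcon
  refine SylSch.core (m + k) k hk (by omega) ?_ ?_ ?_
  · intro p hp hd
    by_contra hpk
    refine hcon ⟨p, hp, by omega, ?_⟩
    have h1 : p ∣ (m + 1).ascFactorial k := by
      rw [Nat.ascFactorial_eq_factorial_mul_choose]
      exact Dvd.dvd.mul_left hd _
    rw [Nat.ascFactorial_eq_prod_range, hp.prime.dvd_finsetProd_iff] at h1
    obtain ⟨i, hi, h⟩ := h1
    rw [Finset.mem_range] at hi
    exact ⟨i + 1, by omega, by omega, by rwa [show m + (i + 1) = m + 1 + i by ring]⟩
  · rintro ⟨p, hp, h1, h2⟩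
    exact hcon ⟨p, hp, by omega, p - m, by omega, by omega, by
      rw [show m + (p - m) = p by omega]⟩
  · rintro ⟨p, hp, h1, j, hj, h2⟩
    exact hcon ⟨p, hp, by omega, k - j, by omega, by omega, by
      rwa [show m + (k - j) = m + k - j by omega]⟩
end
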